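/- arXiv:2509.05055 — 3 statements merged into one kernel-verified Lean document; each statement's English description precedes it below -/
import Mathlib

section
/- Let a, a', b, ℓ, s, N, k, Δ⁻ be positive integers with ℓ ≥ 2 and 2a' ≥ a, and let T be a tournament on N vertices with a median order v_1, …, v_N. Let o be an integer with 2ℓa' < o ≤ N − a + 1, and let B ⊆ [o, o + a) be a subset with |B| ≥ b. Then there exist an integer o' with o − 2ℓa' ≤ o' ≤ o − a' and a set A ⊆ [o', o' + a') such that: (1) |A| ≥ (a'/2)·((ℓ−1)/(2ℓ))^k, and (2) the number of Δ⁻-element subsets S ⊆ A with |N⁺(S) ∩ B| ≤ s is at most 4·((2ℓ)/(ℓ−1))^k·C(a', Δ⁻)·(s/b)^k. -/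
/-- A tournament: a digraph in which every pair of distinct vertices is joined
by an edge in exactly one direction, and there are no loops. -/
def Digraph.IsTournament {V : Type*} (T : Digraph V) : Prop :=
  (∀ v : V, ¬ T.Adj v v) ∧ ∀ u v : V, u ≠ v → (T.Adj u v ↔ ¬ T.Adj v u)

/-- The number of forward edges of `T` under the vertex ordering `v 0, v 1, …`. -/
noncomputable def forwardEdges {V : Type*} {N : ℕ} (T : Digraph V) (v : Fin N ≃ V) : ℕ :=
  Nat.card {p : Fin N × Fin N | p.1 < p.2 ∧ T.Adj (v p.1) (v p.2)}

/-- `v` is a median order of `T`: it maximizes the number of forward edges over all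
orderings of the vertices of `T`. -/
def IsMedianOrder {V : Type*} {N : ℕ} (T : Digraph V) (v : Fin N ≃ V) : Prop :=
  ∀ w : Fin N ≃ V, forwardEdges T w ≤ forwardEdges T v

/-- The interval `[lo, hi)` of a vertex ordering `v`, in the paper's 1-indexed notation:
the set `{v_lo, v_{lo+1}, …, v_{hi-1}}`. -/
def ordInterval {V : Type*} [DecidableEq V] {N : ℕ} (v : Fin N ≃ V) (lo hi : ℕ) :
    Finset V :=
  (Finset.univ.filter (fun p : Fin N => lo ≤ (p : ℕ) + 1 ∧ (p : ℕ) + 1 < hi)).image v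

/-- The common out-neighborhood of a finite set `X` of vertices of a digraph. -/
def commonOutNbhd {V : Type*} [Fintype V] [DecidableEq V] (T : Digraph V)
    [DecidableRel T.Adj] (X : Finset V) : Finset V :=
  Finset.univ.filter (fun v => ∀ x ∈ X, T.Adj x v)

/- At least half of an interval of a median order sends edges to the vertex following it, since
otherwise moving that vertex in front of the interval would create more forward edges. Hence the
window of `2ℓa'` vertices before `o` sends edges to `B` with density at least `(ℓ - 1) / (2ℓ)`: the
loss from `1 / 2` accounts for the vertices of `[o, o + a)` preceding the one considered. By
averaging, so does one of the `2ℓ` blocks of length `a'` which make up the window. Dependent random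
choice between this block and `B` concludes: the block vertices dominating a random `k`-tuple from
`B` are numerous on average, while a set with at most `s` common out-neighbours in `B` is dominating
with probability at most `(s / |B|) ^ k`. -/

open Finset

section Averaging

variable {ι 𝕜 : Type*} [Field 𝕜] [LinearOrder 𝕜] [IsStrictOrderedRing 𝕜]
  {s : Finset ι} {f g : ι → 𝕜}

theorem card_mul_pow_le_sum_pow {c : 𝕜} (hc : 0 ≤ c) (hf : ∀ i ∈ s, 0 ≤ f i)
    (h : #s * c ≤ ∑ i ∈ s, f i) (k : ℕ) : #s * c ^ k ≤ ∑ i ∈ s, f i ^ k := by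
  obtain rfl | hs := s.eq_empty_or_nonempty
  · simp
  obtain _ | n := k
  · simp
  have hcard : (0 : 𝕜) < #s ^ n := by have := hs.card_pos; positivity
  refine le_of_mul_le_mul_left ?_ hcard
  calc (#s : 𝕜) ^ n * (#s * c ^ (n + 1)) = (#s * c) ^ (n + 1) := by ring
    _ ≤ (∑ i ∈ s, f i) ^ (n + 1) := by gcongr
    _ ≤ #s ^ n * ∑ i ∈ s, f i ^ (n + 1) := pow_sum_le_card_mul_sum_pow hf n

theorem exists_half_le_and_le_of_sum_le {M μ y : 𝕜} (hs : s.Nonempty) (hμ : 0 < μ)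
    (hfM : ∀ i ∈ s, f i ≤ M) (hf : #s * μ ≤ ∑ i ∈ s, f i)
    (hg : ∀ i ∈ s, 0 ≤ g i) (hgy : ∑ i ∈ s, g i ≤ #s * y) :
    ∃ i ∈ s, μ / 2 ≤ f i ∧ g i ≤ 2 * M / μ * y := by
  have hg_sum : 0 ≤ ∑ i ∈ s, g i := sum_nonneg hg
  have hy : 0 ≤ y :=
    nonneg_of_mul_nonneg_right (hg_sum.trans hgy) (Nat.cast_pos.mpr hs.card_pos)
  obtain rfl | hy := hy.eq_or_lt
  · have hg_zero : ∀ i ∈ s, g i = 0 :=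
      (sum_eq_zero_iff_of_nonneg hg).mp ((hgy.trans_eq (mul_zero _)).antisymm hg_sum)
    obtain ⟨i, hi, hle⟩ : ∃ i ∈ s, μ ≤ f i :=
      exists_le_of_sum_le hs (by rwa [sum_const, nsmul_eq_mul])
    exact ⟨i, hi, by linarith, by rw [hg_zero i hi, mul_zero]⟩
  -- If `f` and `g` have means `μ` and `y`, then `f - (μ / 2y) g` has mean `μ / 2`.
  · obtain ⟨i, hi, hle⟩ : ∃ i ∈ s, μ / 2 ≤ f i - μ / (2 * y) * g i := by
      refine exists_le_of_sum_le hs ?_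
      have : μ / (2 * y) * ∑ i ∈ s, g i ≤ μ / (2 * y) * (#s * y) := by gcongr
      have hcancel : μ / (2 * y) * (#s * y) = #s * (μ / 2) := by field_simp
      rw [sum_const, nsmul_eq_mul, sum_sub_distrib, ← mul_sum]
      linarith
    have hgi : 0 ≤ μ / (2 * y) * g i := mul_nonneg (by positivity) (hg i hi)
    refine ⟨i, hi, by linarith, ?_⟩
    calc g i = 2 * (μ / (2 * y) * g i) / μ * y := by field_simp
      _ ≤ 2 * M / μ * y := by
        have := hfM i hi
        gcongr
        linarith

end Averaging

section BipartiteRelation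

variable {α β : Type*} (R : α → β → Prop) [∀ x, DecidablePred (R x)]

theorem card_interedges_eq_sum_left (I : Finset α) (B : Finset β) :
    #(Rel.interedges R I B) = ∑ x ∈ I, #{y ∈ B | R x y} := by
  simp only [Rel.interedges, card_filter, sum_product]

theorem card_interedges_eq_sum_right (I : Finset α) (B : Finset β) :
    #(Rel.interedges R I B) = ∑ y ∈ B, #{x ∈ I | R x y} := by
  simp only [Rel.interedges, card_filter, sum_product_right]

theorem card_interedges_eq_edgeDensity_mul (I : Finset α) (B : Finset β) :
    (#(Rel.interedges R I B) : ℚ) = Rel.edgeDensity R I B * (#I * #B) := by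
  refine (div_mul_cancel_of_imp fun h => ?_).symm
  have := Rel.card_interedges_le_mul R I B
  norm_cast at h ⊢
  omega

theorem edgeDensity_union_le_max [DecidableEq α] {I J : Finset α} (hIJ : Disjoint I J)
    (B : Finset β) :
    Rel.edgeDensity R (I ∪ J) B ≤ max (Rel.edgeDensity R I B) (Rel.edgeDensity R J B) := by
  have hsplit : #(Rel.interedges R (I ∪ J) B) =
      #(Rel.interedges R I B) + #(Rel.interedges R J B) := by
    simp only [card_interedges_eq_sum_left, sum_union hIJ]
  refine div_le_of_le_mul₀ (by positivity)
    ((Rel.edgeDensity_nonneg R I B).trans (le_max_left _ _)) ?_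
  rw [hsplit, card_union_of_disjoint hIJ, Nat.cast_add, Nat.cast_add,
    card_interedges_eq_edgeDensity_mul, card_interedges_eq_edgeDensity_mul, add_mul, mul_add]
  gcongr
  exacts [le_max_left _ _, le_max_right _ _]

/-- The `d`-element subsets of `A` with at most `s` common neighbours in `B`, which dependent random
choice is meant to make rare. -/
def lowCodegreeSets (A : Finset α) (B : Finset β) (d s : ℕ) : Finset (Finset α) :=
  {S ∈ A.powersetCard d | #{y ∈ B | ∀ x ∈ S, R x y} ≤ s}

/-- The elements of `I` related to every entry of the tuple `t`. -/
def commonNbhd {k : ℕ} (I : Finset α) (t : Fin k → β) : Finset α :=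
  {x ∈ I | ∀ i, R x (t i)}

variable {R} (I : Finset α) (B : Finset β)

theorem sum_card_commonNbhd (k : ℕ) :
    ∑ t ∈ Fintype.piFinset fun _ : Fin k => B, #(commonNbhd R I t) =
      ∑ x ∈ I, #{y ∈ B | R x y} ^ k := by
  refine (sum_card_bipartiteAbove_eq_sum_card_bipartiteBelow
    fun (t : Fin k → β) x => ∀ i, R x (t i)).trans (sum_congr rfl fun x _ => ?_)
  have tuples_eq : (Fintype.piFinset fun _ => B).bipartiteBelow
      (fun (t : Fin k → β) x => ∀ i, R x (t i)) x = Fintype.piFinset fun _ => {y ∈ B | R x y} := by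
    ext t
    simp [bipartiteBelow, forall_and]
  rw [tuples_eq, Fintype.card_piFinset_const]

theorem sum_card_lowCodegreeSets_commonNbhd_le (k d s : ℕ) :
    ∑ t ∈ Fintype.piFinset fun _ : Fin k => B, #(lowCodegreeSets R (commonNbhd R I t) B d s) ≤
      (#I).choose d * s ^ k := by
  classical
  have sets_eq (t : Fin k → β) : lowCodegreeSets R (commonNbhd R I t) B d s =
      (lowCodegreeSets R I B d s).bipartiteAbove (fun t S => ∀ x ∈ S, ∀ i, R x (t i)) t := by
    ext S
    simp only [lowCodegreeSets, commonNbhd, bipartiteAbove, mem_filter, mem_powersetCard,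
      subset_iff]
    grind
  have card_tuples_le (S) (hS : S ∈ lowCodegreeSets R I B d s) :
      #((Fintype.piFinset fun _ => B).bipartiteBelow
        (fun (t : Fin k → β) S => ∀ x ∈ S, ∀ i, R x (t i)) S) ≤ s ^ k := by
    have tuples_eq : (Fintype.piFinset fun _ => B).bipartiteBelow
        (fun (t : Fin k → β) S => ∀ x ∈ S, ∀ i, R x (t i)) S =
        Fintype.piFinset fun _ => {y ∈ B | ∀ x ∈ S, R x y} := by
      ext t
      simp only [bipartiteBelow, mem_filter, Fintype.mem_piFinset]
      grind
    rw [tuples_eq, Fintype.card_piFinset_const]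
    exact Nat.pow_le_pow_left (mem_filter.mp hS).2 k
  have card_sets_le : #(lowCodegreeSets R I B d s) ≤ (#I).choose d :=
    (card_filter_le _ _).trans_eq (card_powersetCard d I)
  simp only [sets_eq, sum_card_bipartiteAbove_eq_sum_card_bipartiteBelow]
  exact (sum_le_card_nsmul _ _ _ card_tuples_le).trans (Nat.mul_le_mul_right _ card_sets_le)

variable {I B}

theorem card_mul_edgeDensity_pow_le_sum_card_commonNbhd (k : ℕ) :
    (#B : ℚ) ^ k * (#I * Rel.edgeDensity R I B ^ k) ≤
      ∑ t ∈ Fintype.piFinset fun _ : Fin k => B, (#(commonNbhd R I t) : ℚ) := by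
  have mean_degree : #I * (Rel.edgeDensity R I B * #B) ≤ ∑ x ∈ I, (#{y ∈ B | R x y} : ℚ) := by
    rw [← Nat.cast_sum, ← card_interedges_eq_sum_left, card_interedges_eq_edgeDensity_mul,
      mul_left_comm]
  calc (#B : ℚ) ^ k * (#I * Rel.edgeDensity R I B ^ k)
      = #I * (Rel.edgeDensity R I B * #B) ^ k := by ring
    _ ≤ ∑ x ∈ I, (#{y ∈ B | R x y} : ℚ) ^ k :=
      card_mul_pow_le_sum_pow (mul_nonneg (Rel.edgeDensity_nonneg R I B) (Nat.cast_nonneg _))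
        (fun _ _ => Nat.cast_nonneg _) mean_degree k
    _ = ∑ t ∈ Fintype.piFinset fun _ : Fin k => B, (#(commonNbhd R I t) : ℚ) := by
      exact_mod_cast (sum_card_commonNbhd I B k).symm

theorem exists_subset_card_lowCodegreeSets_le (h : 0 < Rel.edgeDensity R I B) (k d s : ℕ) :
    ∃ A ⊆ I, #I / 2 * Rel.edgeDensity R I B ^ k ≤ #A ∧
      (#(lowCodegreeSets R A B d s) : ℚ) ≤
        2 * (Rel.edgeDensity R I B)⁻¹ ^ k * (#I).choose d * (s / #B) ^ k := by
  have hI : 0 < #I := by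
    by_contra! hI
    simp_all
  have hB : B.Nonempty := by
    by_contra! hB
    simp_all
  have : 0 < #B := hB.card_pos
  obtain ⟨t, -, hA, hlow⟩ := exists_half_le_and_le_of_sum_le
    (s := Fintype.piFinset fun _ : Fin k => B)
    (f := fun t => (#(commonNbhd R I t) : ℚ))
    (g := fun t => (#(lowCodegreeSets R (commonNbhd R I t) B d s) : ℚ))
    (M := #I) (μ := #I * Rel.edgeDensity R I B ^ k) (y := (#I).choose d * (s / #B : ℚ) ^ k)
    (Fintype.piFinset_nonempty.mpr fun _ => hB) (by positivity)
    (fun t _ => by exact_mod_cast card_filter_le _ _)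
    (by
      rw [Fintype.card_piFinset_const, Nat.cast_pow]
      exact card_mul_edgeDensity_pow_le_sum_card_commonNbhd k)
    (fun _ _ => Nat.cast_nonneg _)
    (by
      have := sum_card_lowCodegreeSets_commonNbhd_le (R := R) I B k d s
      rw [Fintype.card_piFinset_const, div_pow]
      push_cast
      field_simp
      exact_mod_cast this)
  refine ⟨commonNbhd R I t, filter_subset _ _, by linarith, hlow.trans_eq ?_⟩
  rw [inv_pow]
  field_simp

end BipartiteRelation

/-- A digraph in which any two distinct vertices are joined by at least one edge. Unlike in a
tournament, loops and pairs of opposite edges are allowed. -/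
def IsSemicomplete {V : Type*} (T : Digraph V) : Prop :=
  Pairwise fun u v => T.Adj u v ∨ T.Adj v u

section MedianOrder

variable {V : Type*} {N : ℕ} {T : Digraph V} {v : Fin N ≃ V}

theorem isSemicomplete_of_isTournament (hT : T.IsTournament) : IsSemicomplete T := fun u w huw => by
  have := hT.2 u w huw
  tauto

theorem forwardEdges_symm_trans [DecidableRel T.Adj] (σ : Equiv.Perm (Fin N)) :
    forwardEdges T (σ.symm.trans v) =
      #{p : Fin N × Fin N | σ p.1 < σ p.2 ∧ T.Adj (v p.1) (v p.2)} := by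
  rw [forwardEdges, ← Nat.card_eq_finsetCard]
  exact (Nat.card_congr ((σ.prodCongr σ).subtypeEquiv fun p => by simp)).symm

theorem forwardEdges_eq_card [DecidableRel T.Adj] :
    forwardEdges T v = #{p : Fin N × Fin N | p.1 < p.2 ∧ T.Adj (v p.1) (v p.2)} :=
  forwardEdges_symm_trans (Equiv.refl _)

-- Reordering by `σ` gains the backward edges it inverts and loses the forward ones.
theorem IsMedianOrder.card_inverted_backward_le [DecidableRel T.Adj] (hv : IsMedianOrder T v)
    (σ : Equiv.Perm (Fin N)) :
    #{p : Fin N × Fin N | (p.1 < p.2 ∧ σ p.2 < σ p.1) ∧ T.Adj (v p.2) (v p.1)} ≤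
      #{p : Fin N × Fin N | (p.1 < p.2 ∧ σ p.2 < σ p.1) ∧ T.Adj (v p.1) (v p.2)} := by
  have before : forwardEdges T v =
      #{p : Fin N × Fin N | (p.1 < p.2 ∧ σ p.1 < σ p.2) ∧ T.Adj (v p.1) (v p.2)} +
        #{p : Fin N × Fin N | (p.1 < p.2 ∧ σ p.2 < σ p.1) ∧ T.Adj (v p.1) (v p.2)} := by
    rw [forwardEdges_eq_card, ← card_filter_add_card_filter_not fun p => σ p.1 < σ p.2,
      filter_filter, filter_filter]
    congr 2 <;> ext ⟨p, q⟩ <;> grind [σ.injective.eq_iff]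
  have after : forwardEdges T (σ.symm.trans v) =
      #{p : Fin N × Fin N | (p.1 < p.2 ∧ σ p.1 < σ p.2) ∧ T.Adj (v p.1) (v p.2)} +
        #{p : Fin N × Fin N | (p.1 < p.2 ∧ σ p.2 < σ p.1) ∧ T.Adj (v p.2) (v p.1)} := by
    rw [forwardEdges_symm_trans, ← card_filter_add_card_filter_not fun p => p.1 < p.2,
      filter_filter, filter_filter]
    congr 1
    · congr 1
      ext ⟨p, q⟩
      grind
    · exact card_equiv (Equiv.prodComm _ _) fun ⟨p, q⟩ => by grind
  have := hv (σ.symm.trans v)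
  omega

theorem val_cycleIcc {i j : Fin N} (hij : i ≤ j) (p : Fin N) :
    (Fin.cycleIcc i j p : ℕ) = if p = j then (i : ℕ) else if i ≤ p ∧ p < j then p + 1 else p := by
  have : NeZero N := ⟨by have := j.2; omega⟩
  split_ifs with hpj hp
  · rw [hpj, Fin.cycleIcc_of_last hij]
  · rw [Fin.cycleIcc_of_ge_of_lt hp.1 hp.2]
    exact Fin.val_add_one_of_lt' (by have := hp.2; omega)
  · obtain hpi | hjp : p < i ∨ j < p := by grind
    · rw [Fin.cycleIcc_of_lt hpi]
    · rw [Fin.cycleIcc_of_gt hjp]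

theorem lt_and_cycleIcc_lt_iff {i j : Fin N} (hij : i ≤ j) (p q : Fin N) :
    p < q ∧ Fin.cycleIcc i j q < Fin.cycleIcc i j p ↔ (i ≤ p ∧ p < j) ∧ q = j := by
  simp only [Fin.lt_def, val_cycleIcc hij]
  grind

theorem IsMedianOrder.card_outNeighbors_Ico_le [DecidableRel T.Adj] (hv : IsMedianOrder T v)
    (i j : Fin N) :
    #{p ∈ Ico i j | T.Adj (v j) (v p)} ≤ #{p ∈ Ico i j | T.Adj (v p) (v j)} := by
  obtain hij | hji := le_or_gt i j
  · have inverted_eq (P : Fin N → Fin N → Prop) [DecidableRel P] :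
        #{p : Fin N × Fin N |
          (p.1 < p.2 ∧ Fin.cycleIcc i j p.2 < Fin.cycleIcc i j p.1) ∧ P p.1 p.2} =
          #{p ∈ Ico i j | P p j} := by
      refine card_nbij' Prod.fst (·, j) ?_ ?_ ?_ ?_ <;>
        simp only [lt_and_cycleIcc_lt_iff hij, coe_filter, Set.MapsTo, Set.LeftInvOn] <;> grind
    have := hv.card_inverted_backward_le (Fin.cycleIcc i j)
    rwa [inverted_eq fun p q => T.Adj (v q) (v p), inverted_eq fun p q => T.Adj (v p) (v q)] at this
  · simp [Ico_eq_empty_of_le hji.le]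

theorem IsMedianOrder.sub_le_two_mul_card_inNeighbors_Ico [DecidableRel T.Adj]
    (hT : IsSemicomplete T) (hv : IsMedianOrder T v) (i j : Fin N) :
    (j : ℕ) - i ≤ 2 * #{p ∈ Ico i j | T.Adj (v p) (v j)} := by
  classical
  have cover : Ico i j ⊆
      {p ∈ Ico i j | T.Adj (v p) (v j)} ∪ {p ∈ Ico i j | T.Adj (v j) (v p)} := by
    intro p hp
    have := hT (v.injective.ne (mem_Ico.mp hp).2.ne)
    simp only [mem_union, mem_filter]
    tauto
  calc (j : ℕ) - i = #(Ico i j) := (Fin.card_Ico i j).symm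
    _ ≤ #{p ∈ Ico i j | T.Adj (v p) (v j)} + #{p ∈ Ico i j | T.Adj (v j) (v p)} :=
      (card_le_card cover).trans (card_union_le _ _)
    _ ≤ 2 * #{p ∈ Ico i j | T.Adj (v p) (v j)} := by
      have := hv.card_outNeighbors_Ico_le i j
      omega

end MedianOrder

section OrdInterval

variable {V : Type*} [DecidableEq V] {N : ℕ} {v : Fin N ≃ V}

theorem mem_ordInterval {lo hi : ℕ} {x : V} :
    x ∈ ordInterval v lo hi ↔ lo ≤ (v.symm x : ℕ) + 1 ∧ (v.symm x : ℕ) + 1 < hi := by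
  simp [ordInterval, ← v.eq_symm_apply]

theorem card_ordInterval {lo hi : ℕ} (hlo : 1 ≤ lo) (hhi : hi ≤ N + 1) :
    #(ordInterval v lo hi) = hi - lo := by
  rw [← Nat.card_Ico]
  refine card_nbij (fun x => (v.symm x : ℕ) + 1) (fun x hx => ?_) (fun x _ y _ hxy => ?_)
    fun n hn => ?_
  · simpa [mem_ordInterval] using hx
  · simpa [← Fin.ext_iff] using hxy
  · obtain ⟨hlon, hnhi⟩ := mem_Ico.mp (mem_coe.mp hn)
    refine ⟨v ⟨n - 1, by omega⟩, ?_, ?_⟩ <;>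
      simp only [mem_coe, mem_ordInterval, v.symm_apply_apply] <;> omega

theorem ordInterval_union_ordInterval {lo mid hi : ℕ} (hlo : lo ≤ mid) (hhi : mid ≤ hi) :
    ordInterval v lo mid ∪ ordInterval v mid hi = ordInterval v lo hi := by
  ext x
  simp only [mem_union, mem_ordInterval]
  omega

theorem disjoint_ordInterval {lo mid hi : ℕ} :
    Disjoint (ordInterval v lo mid) (ordInterval v mid hi) := by
  simp only [disjoint_left, mem_ordInterval]
  omega

theorem exists_edgeDensity_ordInterval_le (R : V → V → Prop) [DecidableRel R] (B : Finset V)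
    (lo c : ℕ) {n : ℕ} (hn : 1 ≤ n) :
    ∃ m < n, Rel.edgeDensity R (ordInterval v lo (lo + n * c)) B ≤
      Rel.edgeDensity R (ordInterval v (lo + m * c) (lo + (m + 1) * c)) B := by
  induction n, hn using Nat.le_induction with
  | base => exact ⟨0, one_pos, by simp⟩
  | succ n _ ih =>
    have hsplit : ordInterval v lo (lo + n * c) ∪
        ordInterval v (lo + n * c) (lo + (n + 1) * c) = ordInterval v lo (lo + (n + 1) * c) :=
      ordInterval_union_ordInterval (by omega) (by gcongr; omega)
    obtain h | h := le_max_iff.mp (edgeDensity_union_le_max R disjoint_ordInterval B)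
    · obtain ⟨m, hm, hle⟩ := ih
      exact ⟨m, hm.trans n.lt_succ_self, hsplit ▸ h.trans hle⟩
    · exact ⟨n, n.lt_succ_self, hsplit ▸ h⟩

variable {T : Digraph V} [DecidableRel T.Adj] {o w a : ℕ}

theorem IsMedianOrder.le_two_mul_card_inNeighbors_add (hT : IsSemicomplete T)
    (hv : IsMedianOrder T v) (hw : w < o) {y : V} (hy : y ∈ ordInterval v o (o + a)) :
    w ≤ 2 * #{x ∈ ordInterval v (o - w) o | T.Adj x y} + a := by
  obtain ⟨j, rfl⟩ := v.surjective y
  rw [mem_ordInterval, v.symm_apply_apply] at hy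
  let i : Fin N := ⟨o - w - 1, by omega⟩
  let m : Fin N := ⟨o - 1, by omega⟩
  have hi : (i : ℕ) = o - w - 1 := rfl
  have hm : (m : ℕ) = o - 1 := rfl
  have half : (j : ℕ) - i ≤ 2 * #{p ∈ Ico i j | T.Adj (v p) (v j)} :=
    hv.sub_le_two_mul_card_inNeighbors_Ico hT i j
  have split : #{p ∈ Ico i j | T.Adj (v p) (v j)} ≤
      #{p ∈ Ico i m | T.Adj (v p) (v j)} + #(Ico m j) := by
    refine (card_le_card fun p hp => ?_).trans (card_union_le _ _)
    grind
  have transfer : #{p ∈ Ico i m | T.Adj (v p) (v j)} ≤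
      #{x ∈ ordInterval v (o - w) o | T.Adj x (v j)} := by
    refine card_le_card_of_injOn v (fun p hp => ?_) v.injective.injOn
    simp only [coe_filter, Set.mem_ofPred_eq, mem_Ico, Fin.le_def, Fin.lt_def] at hp
    simp only [coe_filter, Set.mem_ofPred_eq, mem_ordInterval, v.symm_apply_apply]
    exact ⟨⟨by omega, by omega⟩, hp.2⟩
  have hmj : #(Ico m j) = j - m := Fin.card_Ico m j
  omega

theorem IsMedianOrder.le_edgeDensity (hT : IsSemicomplete T) (hv : IsMedianOrder T v)
    (hw : w < o) {B : Finset V} (hB : B.Nonempty) (hBsub : B ⊆ ordInterval v o (o + a)) :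
    ((w : ℚ) - a) / (2 * w) ≤ Rel.edgeDensity T.Adj (ordInterval v (o - w) o) B := by
  obtain ⟨y, hy⟩ := hB
  have hoN : o ≤ N := by have := mem_ordInterval.mp (hBsub hy); omega
  have hB0 : (0 : ℚ) < #B := by exact_mod_cast card_pos.mpr ⟨y, hy⟩
  have hcard : #(ordInterval v (o - w) o) = w := by
    rw [card_ordInterval (by omega) (by omega)]; omega
  have hedges : #B * (((w : ℚ) - a) / 2) ≤ #(Rel.interedges T.Adj (ordInterval v (o - w) o) B) := by
    rw [card_interedges_eq_sum_right, Nat.cast_sum, ← nsmul_eq_mul]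
    refine card_nsmul_le_sum _ _ _ fun z hz => ?_
    have : (w : ℚ) ≤ 2 * #{x ∈ ordInterval v (o - w) o | T.Adj x z} + a := by
      exact_mod_cast hv.le_two_mul_card_inNeighbors_add hT hw (hBsub hz)
    linarith
  calc ((w : ℚ) - a) / (2 * w) = #B * (((w : ℚ) - a) / 2) / (w * #B) := by field_simp
    _ ≤ Rel.edgeDensity T.Adj (ordInterval v (o - w) o) B := by
      rw [Rel.edgeDensity, hcard]
      gcongr

theorem IsMedianOrder.exists_ordInterval_le_edgeDensity (hT : IsSemicomplete T)
    (hv : IsMedianOrder T v) {a' ℓ : ℕ} (hℓ : 1 ≤ ℓ) (haa' : a ≤ 2 * a') (ho : 2 * ℓ * a' < o)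
    {B : Finset V} (hB : B.Nonempty) (hBsub : B ⊆ ordInterval v o (o + a)) :
    ∃ o', o - 2 * ℓ * a' ≤ o' ∧ o' ≤ o - a' ∧ #(ordInterval v o' (o' + a')) = a' ∧
      ((ℓ : ℚ) - 1) / (2 * ℓ) ≤ Rel.edgeDensity T.Adj (ordInterval v o' (o' + a')) B := by
  have window_density := hv.le_edgeDensity hT ho hB hBsub
  obtain ⟨y, hy⟩ := hB
  have hyo := mem_ordInterval.mp (hBsub hy)
  obtain ⟨m, hm, hblock⟩ := exists_edgeDensity_ordInterval_le (v := v) T.Adj B (o - 2 * ℓ * a') a'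
    (n := 2 * ℓ) (by omega)
  rw [Nat.sub_add_cancel ho.le, add_one_mul, ← add_assoc] at hblock
  have hm_end : m * a' + a' ≤ 2 * ℓ * a' := by
    rw [← add_one_mul]
    exact Nat.mul_le_mul_right a' hm
  refine ⟨o - 2 * ℓ * a' + m * a', Nat.le_add_right _ _, by omega, ?_,
    le_trans ?_ (window_density.trans hblock)⟩
  · rw [card_ordInterval (by omega) (by omega), Nat.add_sub_cancel_left]
  · have ha' : (0 : ℚ) < a' := by
      norm_cast
      omega
    have : (a : ℚ) ≤ 2 * a' := by exact_mod_cast haa'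
    push_cast
    calc ((ℓ : ℚ) - 1) / (2 * ℓ) = (2 * ℓ * a' - 2 * a') / (2 * (2 * ℓ * a')) := by field_simp
      _ ≤ (2 * ℓ * a' - a) / (2 * (2 * ℓ * a')) := by gcongr

end OrdInterval

theorem filter_commonOutNbhd_eq_lowCodegreeSets {V : Type*} [Fintype V] [DecidableEq V]
    (T : Digraph V) [DecidableRel T.Adj] (A B : Finset V) (d s : ℕ) :
    {S ∈ A.powersetCard d | #(commonOutNbhd T S ∩ B) ≤ s} = lowCodegreeSets T.Adj A B d s := by
  refine filter_congr fun S _ => ?_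
  congr! 2
  ext y
  simp [commonOutNbhd, and_comm]

theorem graded_backward_step_general {V : Type*} [Fintype V] [DecidableEq V] {N : ℕ}
    (T : Digraph V) [DecidableRel T.Adj] (hT : IsSemicomplete T)
    (v : Fin N ≃ V) (hmed : IsMedianOrder T v)
    (a a' b ℓ s k Δm : ℕ) (hb : 1 ≤ b) (hℓ : 2 ≤ ℓ) (haa' : a ≤ 2 * a')
    (o : ℕ) (ho : 2 * ℓ * a' < o)
    (B : Finset V) (hBsub : B ⊆ ordInterval v o (o + a)) (hBcard : b ≤ #B) :
    ∃ o' : ℕ, o - 2 * ℓ * a' ≤ o' ∧ o' ≤ o - a' ∧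
      ∃ A : Finset V, A ⊆ ordInterval v o' (o' + a') ∧
        ((a' : ℝ) / 2) * (((ℓ : ℝ) - 1) / (2 * (ℓ : ℝ))) ^ k ≤ (#A : ℝ) ∧
        (#{S ∈ A.powersetCard Δm | #(commonOutNbhd T S ∩ B) ≤ s} : ℝ) ≤
          2 * ((2 * (ℓ : ℝ)) / ((ℓ : ℝ) - 1)) ^ k * (a'.choose Δm : ℕ) *
            ((s : ℝ) / (b : ℝ)) ^ k := by
  have hB : B.Nonempty := card_pos.mp (hb.trans hBcard)
  obtain ⟨o', hlo, hhi, hI, hdens⟩ :=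
    hmed.exists_ordInterval_le_edgeDensity hT (by omega) haa' ho hB hBsub
  set I := ordInterval v o' (o' + a')
  set r : ℚ := (ℓ - 1) / (2 * ℓ) with hr
  have hr_pos : 0 < r := by
    have : (1 : ℚ) < ℓ := by exact_mod_cast hℓ
    exact div_pos (by linarith) (by linarith)
  have hd_pos := hr_pos.trans_le hdens
  obtain ⟨A, hAI, hA, hlow⟩ := exists_subset_card_lowCodegreeSets_le hd_pos k Δm s
  rw [hI] at hA hlow
  refine ⟨o', hlo, hhi, A, hAI, ?_, ?_⟩
  · have : (a' / 2 : ℚ) * r ^ k ≤ #A := le_trans (by gcongr) hA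
    simpa [hr] using (Rat.cast_le (K := ℝ)).mpr this
  · have : (#(lowCodegreeSets T.Adj A B Δm s) : ℚ) ≤
        2 * r⁻¹ ^ k * a'.choose Δm * (s / b) ^ k := hlow.trans (by gcongr)
    rw [hr, inv_div] at this
    rw [filter_commonOutNbhd_eq_lowCodegreeSets]
    simpa using (Rat.cast_le (K := ℝ)).mpr this

/-- (Backward step for graded digraphs.) -/
theorem graded_backward_step {V : Type} [Fintype V] [DecidableEq V] {N : ℕ}
    (T : Digraph V) [DecidableRel T.Adj] (hT : T.IsTournament)
    (v : Fin N ≃ V) (hmed : IsMedianOrder T v)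
    (a a' b ℓ s k Δm : ℕ)
    (ha : 1 ≤ a) (ha' : 1 ≤ a') (hb : 1 ≤ b) (hℓ : 2 ≤ ℓ) (hs : 1 ≤ s)
    (hk : 1 ≤ k) (hΔm : 1 ≤ Δm) (haa' : a ≤ 2 * a')
    (o : ℕ) (ho1 : 2 * ℓ * a' < o) (ho2 : o ≤ N - a + 1)
    (B : Finset V) (hBsub : B ⊆ ordInterval v o (o + a)) (hBcard : b ≤ B.card) :
    ∃ o' : ℕ, o - 2 * ℓ * a' ≤ o' ∧ o' ≤ o - a' ∧
      ∃ A : Finset V, A ⊆ ordInterval v o' (o' + a') ∧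
        ((a' : ℝ) / 2) * (((ℓ : ℝ) - 1) / (2 * (ℓ : ℝ))) ^ k ≤ (A.card : ℝ) ∧
        (((A.powersetCard Δm).filter
            (fun S => (commonOutNbhd T S ∩ B).card ≤ s)).card : ℝ) ≤
          4 * ((2 * (ℓ : ℝ)) / ((ℓ : ℝ) - 1)) ^ k * (a'.choose Δm : ℕ) *
            ((s : ℝ) / (b : ℝ)) ^ k := by
  obtain ⟨o', hlo, hhi, A, hA, hcard, hrare⟩ := graded_backward_step_general T
    (isSemicomplete_of_isTournament hT) v hmed a a' b ℓ s k Δm hb hℓ haa' o ho1 B hBsub hBcard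
  exact ⟨o', hlo, hhi, A, hA, hcard, by linarith [(Nat.cast_nonneg _).trans hrare]⟩
end

section
/- Let k ≥ 2 be an integer and let x be a real number with x ≥ (10⁸·log k)/2, where log denotes the natural logarithm. Then there exists a tournament R with vertex set [k] = {1, …, k} such that for every pair of functions f, g : [k] → [0,1] satisfying f(i) + g(i) ≤ 1 for all i ∈ [k] and Σ_{i=1}^{k} (f(i) + g(i)) = 2x, one has Σ over edges (i, j) ∈ E(R) of f(i)·g(j) ≤ 0.51·x². -/
open Classical

/-!
For a tournament `R` and weights `f, g ≥ 0`, twice the weight of the arcs from `f` to `g` is at most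
`(∑ f) (∑ g)` plus the skew form `D(f, g) = ∑ᵢⱼ ([i → j] - [j → i]) fᵢ gⱼ`. The product is at most
`x²` by AM-GM, so it suffices to find `R` for which `D` is uniformly at most `2 ε x²`.

The form `D` is bilinear, and a linear form on the vectors in `[0, 1]ⱽ` of total mass at most `m` is
dominated by its value at the indicator of some set of at most `m` vertices, so only indicators of
such sets matter. Direct the edges by independent fair coins. For fixed sets, `D` is then a
Rademacher sum of variance at most `m²`, and Hoeffding's inequality beats the union bound over the
fewer than `|V| ^ (2 (m + 1))` pairs of sets.
-/

open Finset MeasureTheory ProbabilityTheory Matrix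
open scoped NNReal

lemma exists_subset_card_eq_forall_le {α β : Type*} [LinearOrder β] (w : α → β) (s : Finset α)
    {m : ℕ} (hm : m ≤ #s) :
    ∃ t ⊆ s, #t = m ∧ ∀ i ∈ t, ∀ j ∈ s \ t, w j ≤ w i := by
  induction m with
  | zero => exact ⟨∅, by simp⟩
  | succ m ih =>
    obtain ⟨t, hts, hcard, hle⟩ := ih (by lia)
    have hne : (s \ t).Nonempty := by
      rw [← card_pos, card_sdiff_of_subset hts]
      lia
    obtain ⟨a, ha, hmax⟩ := exists_max_image (s \ t) w hne
    obtain ⟨has, hat⟩ := mem_sdiff.1 ha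
    refine ⟨insert a t, insert_subset has hts, by rw [card_insert_of_notMem hat, hcard], ?_⟩
    intro i hi j hj
    have hj' : j ∈ s \ t := sdiff_subset_sdiff le_rfl (subset_insert a t) hj
    rcases mem_insert.1 hi with rfl | hi
    · exact hmax j hj'
    · exact hle i hi j hj'

lemma exists_threshold_card_le {V : Type*} [Finite V] (w : V → ℝ) (m : ℕ) :
    ∃ (S : Finset V) (t : ℝ), 0 ≤ t ∧ #S ≤ m ∧ (t = 0 ∨ #S = m) ∧
      (∀ i ∈ S, t ≤ w i) ∧ ∀ i ∉ S, w i ≤ t := by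
  have := Fintype.ofFinite V
  set P : Finset V := {i | 0 < w i} with hP
  rcases le_or_gt #P m with hPm | hPm
  · exact ⟨P, 0, le_rfl, hPm, .inl rfl, fun i hi => (mem_filter_univ i).1 hi |>.le,
      fun i hi => by simpa [hP] using hi⟩
  · obtain ⟨S, hSP, hcard, hle⟩ := exists_subset_card_eq_forall_le w P hPm.le
    have hne : (P \ S).Nonempty := by
      rw [← card_pos, card_sdiff_of_subset hSP]
      lia
    obtain ⟨a, ha, hmax⟩ := exists_max_image (P \ S) w hne
    have hpos : 0 < w a := (mem_filter_univ a).1 (mem_sdiff.1 ha).1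
    refine ⟨S, w a, hpos.le, hcard.le, .inr hcard, fun i hi => hle i hi a ha, fun i hi => ?_⟩
    by_cases hiP : i ∈ P
    · exact hmax i (mem_sdiff.2 ⟨hiP, hi⟩)
    · exact (not_lt.1 fun h => hiP ((mem_filter_univ i).2 h)).trans hpos.le

section Rounding

variable {V : Type*}

/-- The `0`-`1` vector of a finite set, to which fractional weight functions are rounded. -/
noncomputable def indicatorVec (S : Finset V) (i : V) : ℝ := if i ∈ S then 1 else 0

lemma indicatorVec_nonneg (S : Finset V) (i : V) : 0 ≤ indicatorVec S i := by
  unfold indicatorVec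
  split_ifs <;> simp

lemma indicatorVec_le_one (S : Finset V) (i : V) : indicatorVec S i ≤ 1 := by
  unfold indicatorVec
  split_ifs <;> simp

variable [Fintype V]

lemma sum_indicatorVec (S : Finset V) : ∑ i, indicatorVec S i = #S := by
  simp [indicatorVec]

lemma exists_card_le_dotProduct_le (w : V → ℝ) {f : V → ℝ} {m : ℕ} (hf₀ : ∀ i, 0 ≤ f i)
    (hf₁ : ∀ i, f i ≤ 1) (hf : ∑ i, f i ≤ m) :
    ∃ S : Finset V, #S ≤ m ∧ f ⬝ᵥ w ≤ indicatorVec S ⬝ᵥ w := by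
  obtain ⟨S, t, ht, hcard, htm, hS, hS'⟩ := exists_threshold_card_le w m
  refine ⟨S, hcard, ?_⟩
  have hterm (i : V) : (f i - indicatorVec S i) * (w i - t) ≤ 0 := by
    by_cases hi : i ∈ S
    · simpa [indicatorVec, hi] using mul_nonpos_of_nonpos_of_nonneg (sub_nonpos.2 (hf₁ i))
        (sub_nonneg.2 (hS i hi))
    · simpa [indicatorVec, hi] using mul_nonpos_of_nonneg_of_nonpos (hf₀ i)
        (sub_nonpos.2 (hS' i hi))
  have hsum : f ⬝ᵥ w - indicatorVec S ⬝ᵥ w - (∑ i, f i - #S) * t =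
      ∑ i, (f i - indicatorVec S i) * (w i - t) := by
    simp only [← sum_indicatorVec, dotProduct, ← sum_sub_distrib, sum_mul]
    exact sum_congr rfl fun i _ => by ring
  have hmass : (∑ i, f i - #S) * t ≤ 0 := by
    rcases htm with rfl | hSm
    · simp
    · exact mul_nonpos_of_nonpos_of_nonneg (by rw [hSm]; linarith) ht
  linarith [sum_nonpos fun i (_ : i ∈ univ) => hterm i]

lemma exists_card_le_dotProduct_mulVec_le (A : Matrix V V ℝ) {f g : V → ℝ} {m : ℕ}
    (hf₀ : ∀ i, 0 ≤ f i) (hf₁ : ∀ i, f i ≤ 1) (hf : ∑ i, f i ≤ m)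
    (hg₀ : ∀ i, 0 ≤ g i) (hg₁ : ∀ i, g i ≤ 1) (hg : ∑ i, g i ≤ m) :
    ∃ S T : Finset V, #S ≤ m ∧ #T ≤ m ∧ f ⬝ᵥ A *ᵥ g ≤ indicatorVec S ⬝ᵥ A *ᵥ indicatorVec T := by
  obtain ⟨S, hS, hfS⟩ := exists_card_le_dotProduct_le (A *ᵥ g) hf₀ hf₁ hf
  obtain ⟨T, hT, hgT⟩ := exists_card_le_dotProduct_le (indicatorVec S ᵥ* A) hg₀ hg₁ hg
  refine ⟨S, T, hS, hT, hfS.trans ?_⟩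
  simpa only [dotProduct_mulVec, dotProduct_comm (indicatorVec S ᵥ* A)] using hgT

end Rounding

section RandomSigns

/-- The sign `±1` encoded by a coin toss, turning `fairCoins` into independent Rademacher
variables. -/
def boolSign (b : Bool) : ℝ := if b then 1 else -1

/-- The distribution of a family of independent fair coin tosses indexed by `ι`. -/
noncomputable def fairCoins (ι : Type*) [Fintype ι] : Measure (ι → Bool) :=
  Measure.pi fun _ => (PMF.uniformOfFintype Bool).toMeasure

variable {ι : Type*} [Fintype ι]

instance : IsProbabilityMeasure (fairCoins ι) := by
  unfold fairCoins
  infer_instance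

lemma hasSubgaussianMGF_const_mul_boolSign (c : ℝ) :
    HasSubgaussianMGF (fun b => c * boolSign b) (‖c‖₊ ^ 2)
      (PMF.uniformOfFintype Bool).toMeasure := by
  have hbound (b : Bool) : c * boolSign b ∈ Set.Icc (-|c|) |c| := by
    cases b <;> simp [boolSign, neg_abs_le, le_abs_self, neg_le_abs]
  have hmean : ∫ b, c * boolSign b ∂(PMF.uniformOfFintype Bool).toMeasure = 0 := by
    simp [PMF.integral_eq_sum, boolSign]
  have hparam : (‖|c| - -|c|‖₊ / 2) ^ 2 = ‖c‖₊ ^ 2 := by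
    ext
    simp [← two_mul]
  exact hparam ▸ hasSubgaussianMGF_of_mem_Icc_of_integral_eq_zero
    (measurable_of_finite _).aemeasurable (.of_forall hbound) hmean

lemma fairCoins_real_sum_ge_le (s : Finset ι) (c : ι → ℝ) {v t : ℝ}
    (hv : ∑ i ∈ s, c i ^ 2 ≤ v) (ht : 0 ≤ t) :
    (fairCoins ι).real {σ | t ≤ ∑ i ∈ s, c i * boolSign (σ i)} ≤ Real.exp (-t ^ 2 / (2 * v)) := by
  have hindep : iIndepFun (fun i (σ : ι → Bool) => c i * boolSign (σ i)) (fairCoins ι) :=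
    iIndepFun_pi (X := fun i b => c i * boolSign b) fun _ => (measurable_of_finite _).aemeasurable
  have hcoord (i : ι) :
      HasSubgaussianMGF (fun σ => c i * boolSign (σ i)) (‖c i‖₊ ^ 2) (fairCoins ι) := by
    refine HasSubgaussianMGF.of_map (measurable_pi_apply i).aemeasurable
      (X := fun b => c i * boolSign b) ?_
    rw [fairCoins, (measurePreserving_eval _ i).map_eq]
    exact hasSubgaussianMGF_const_mul_boolSign (c i)
  have hsum := HasSubgaussianMGF.sum_of_iIndepFun hindep (s := s) fun i _ => hcoord i
  lift v to ℝ≥0 using (sum_nonneg fun i _ => sq_nonneg (c i)).trans hv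
  have hsum_v : HasSubgaussianMGF (fun σ => ∑ i ∈ s, c i * boolSign (σ i)) v (fairCoins ι) :=
    ⟨hsum.integrable_exp_mul, fun l => (hsum.mgf_le l).trans <| by
      gcongr
      exact NNReal.coe_le_coe.1 (by simpa using hv)⟩
  exact hsum_v.measure_ge_le ht

end RandomSigns

section RandomTournament

variable {V : Type*}

/-- The skew-symmetric adjacency matrix of a digraph. The bilinear form
`f ⬝ᵥ skewAdjMatrix R *ᵥ g` is the weight of the arcs from `f` to `g` minus that of the arcs
back. -/
noncomputable def skewAdjMatrix (R : Digraph V) : Matrix V V ℝ :=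
  .of fun i j => (if R.Adj i j then 1 else 0) - (if R.Adj j i then 1 else 0)

variable [LinearOrder V]

/-- The tournament obtained by tossing a coin for each pair `i < j`, directing the edge from `i` to
`j` when the outcome `σ (i, j)` is `true`. The entries of `σ` at pairs with `j ≤ i` are ignored;
they are there so that the coins are indexed by a product type. -/
def coinTournament (σ : V × V → Bool) : Digraph V where
  Adj i j := (i < j ∧ σ (i, j)) ∨ (j < i ∧ ¬ σ (j, i))

lemma isTournament_coinTournament (σ : V × V → Bool) : (coinTournament σ).IsTournament := by
  refine ⟨fun v => by simp [coinTournament], fun u v huv => ?_⟩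
  rcases huv.lt_or_gt with h | h <;> simp [coinTournament, h, h.not_gt]

variable [Fintype V]

lemma sum_sum_eq_sum_lt_add_sum_diag {M : Type*} [AddCommMonoid M] (F : V → V → M) :
    ∑ i, ∑ j, F i j = ∑ p : V × V with p.1 < p.2, (F p.1 p.2 + F p.2 p.1) + ∑ i, F i i := by
  have hsplit (i j : V) : F i j =
      ((if i < j then F i j else 0) + if j < i then F i j else 0) + if i = j then F i j else 0 := by
    rcases lt_trichotomy i j with h | h | h
    · simp [h, h.not_gt, h.ne]
    · simp [h]
    · simp [h, h.not_gt, h.ne']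
  have hswap : ∑ i, ∑ j, (if j < i then F i j else 0) = ∑ i, ∑ j, if i < j then F j i else 0 :=
    sum_comm
  rw [sum_filter, Fintype.sum_prod_type,
    sum_congr rfl fun i _ => sum_congr rfl fun j _ => hsplit i j]
  simp only [sum_add_distrib, hswap, ite_add_zero, sum_ite_eq, mem_univ, if_true]

lemma dotProduct_skewAdjMatrix_coinTournament_mulVec (σ : V × V → Bool) (f g : V → ℝ) :
    f ⬝ᵥ skewAdjMatrix (coinTournament σ) *ᵥ g =
      ∑ p : V × V with p.1 < p.2, (f p.1 * g p.2 - f p.2 * g p.1) * boolSign (σ p) := by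
  simp only [dotProduct, mulVec, mul_sum]
  rw [sum_sum_eq_sum_lt_add_sum_diag]
  have hdiag (i : V) : skewAdjMatrix (coinTournament σ) i i = 0 := by simp [skewAdjMatrix]
  simp only [hdiag, zero_mul, mul_zero, sum_const_zero, add_zero]
  refine sum_congr rfl fun p hp => ?_
  have hlt : p.1 < p.2 := (mem_filter_univ p).1 hp
  cases hσ : σ p <;>
    simp [skewAdjMatrix, coinTournament, boolSign, hlt, hlt.not_gt, hσ] <;> ring

lemma sum_lt_sq_sub_le {f g : V → ℝ} (hf₀ : ∀ i, 0 ≤ f i) (hf₁ : ∀ i, f i ≤ 1)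
    (hg₀ : ∀ i, 0 ≤ g i) (hg₁ : ∀ i, g i ≤ 1) :
    ∑ p : V × V with p.1 < p.2, (f p.1 * g p.2 - f p.2 * g p.1) ^ 2 ≤ (∑ i, f i) * ∑ i, g i := by
  have hsq {a b : ℝ} (ha₀ : 0 ≤ a) (ha₁ : a ≤ 1) (hb₀ : 0 ≤ b) (hb₁ : b ≤ 1) :
      (a - b) ^ 2 ≤ a + b := by nlinarith
  have hnonneg (i j : V) : 0 ≤ f i * g j := mul_nonneg (hf₀ i) (hg₀ j)
  have hle (i j : V) : f i * g j ≤ 1 := mul_le_one₀ (hf₁ i) (hg₀ j) (hg₁ j)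
  calc ∑ p : V × V with p.1 < p.2, (f p.1 * g p.2 - f p.2 * g p.1) ^ 2
      ≤ ∑ p : V × V with p.1 < p.2, (f p.1 * g p.2 + f p.2 * g p.1) :=
        sum_le_sum fun p _ =>
          hsq (hnonneg p.1 p.2) (hle p.1 p.2) (hnonneg p.2 p.1) (hle p.2 p.1)
    _ ≤ ∑ p : V × V with p.1 < p.2, (f p.1 * g p.2 + f p.2 * g p.1) + ∑ i, f i * g i :=
        le_add_of_nonneg_right (sum_nonneg fun i _ => mul_nonneg (hf₀ i) (hg₀ i))
    _ = (∑ i, f i) * ∑ i, g i := by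
        rw [sum_mul_sum]
        exact (sum_sum_eq_sum_lt_add_sum_diag fun i j => f i * g j).symm

lemma fairCoins_real_dotProduct_mulVec_ge_le {f g : V → ℝ} {v t : ℝ}
    (hf₀ : ∀ i, 0 ≤ f i) (hf₁ : ∀ i, f i ≤ 1) (hg₀ : ∀ i, 0 ≤ g i) (hg₁ : ∀ i, g i ≤ 1)
    (hv : (∑ i, f i) * ∑ i, g i ≤ v) (ht : 0 ≤ t) :
    (fairCoins (V × V)).real {σ | t ≤ f ⬝ᵥ skewAdjMatrix (coinTournament σ) *ᵥ g} ≤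
      Real.exp (-t ^ 2 / (2 * v)) := by
  have hvar := (sum_lt_sq_sub_le hf₀ hf₁ hg₀ hg₁).trans hv
  simpa only [dotProduct_skewAdjMatrix_coinTournament_mulVec]
    using fairCoins_real_sum_ge_le _ _ hvar ht

lemma fairCoins_real_indicatorVec_ge_le {S T : Finset V} {m : ℕ} {t : ℝ} (hS : #S ≤ m)
    (hT : #T ≤ m) (ht : 0 ≤ t) :
    (fairCoins (V × V)).real
        {σ | t ≤ indicatorVec S ⬝ᵥ skewAdjMatrix (coinTournament σ) *ᵥ indicatorVec T} ≤
      Real.exp (-t ^ 2 / (2 * m ^ 2)) := by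
  refine fairCoins_real_dotProduct_mulVec_ge_le (indicatorVec_nonneg S) (indicatorVec_le_one S)
    (indicatorVec_nonneg T) (indicatorVec_le_one T) ?_ ht
  rw [sum_indicatorVec, sum_indicatorVec, sq]
  exact_mod_cast Nat.mul_le_mul hS hT

end RandomTournament

section Existence

variable {V : Type*} [Fintype V]

lemma card_filter_card_le_lt [Nontrivial V] (m : ℕ) :
    #{S : Finset V | #S ≤ m} < Fintype.card V ^ (m + 1) := by
  have hunion : ({S : Finset V | #S ≤ m} : Finset (Finset V)) =
      (range (m + 1)).biUnion fun r => powersetCard r univ := by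
    ext S
    simp [mem_powersetCard]
  calc #{S : Finset V | #S ≤ m}
      ≤ ∑ r ∈ range (m + 1), #(powersetCard r (univ : Finset V)) := hunion ▸ card_biUnion_le
    _ ≤ ∑ r ∈ range (m + 1), Fintype.card V ^ r :=
        sum_le_sum fun r _ => by
          simpa only [card_powersetCard, card_univ] using Nat.choose_le_pow _ _
    _ < Fintype.card V ^ (m + 1) := Nat.geomSum_lt Fintype.one_lt_card (by simp)

lemma exists_forall_notMem_of_sum_measureReal_lt_one {Ω κ : Type*} [MeasurableSpace Ω]
    {μ : Measure Ω} [IsProbabilityMeasure μ] {s : Finset κ} {B : κ → Set Ω}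
    (h : ∑ q ∈ s, μ.real (B q) < 1) :
    ∃ ω, ∀ q ∈ s, ω ∉ B q := by
  by_contra! hcover
  have huniv : ⋃ q ∈ s, B q = Set.univ := Set.eq_univ_of_forall fun ω => by simpa using hcover ω
  have hle := measureReal_biUnion_finset_le (μ := μ) s B
  rw [huniv, probReal_univ] at hle
  exact absurd h hle.not_gt

lemma exists_isTournament_forall_card_le [Nontrivial V] {m : ℕ} {t : ℝ} (ht : 0 ≤ t)
    (hmt : 2 * (m + 1) * Real.log (Fintype.card V) ≤ t ^ 2 / (2 * m ^ 2)) :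
    ∃ R : Digraph V, R.IsTournament ∧
      ∀ S T : Finset V, #S ≤ m → #T ≤ m →
        indicatorVec S ⬝ᵥ skewAdjMatrix R *ᵥ indicatorVec T ≤ t := by
  let : LinearOrder V := LinearOrder.lift' (Fintype.equivFin V) (Fintype.equivFin V).injective
  let small : Finset (Finset V) := {S | #S ≤ m}
  let bad (q : Finset V × Finset V) : Set (V × V → Bool) :=
    {σ | t ≤ indicatorVec q.1 ⬝ᵥ skewAdjMatrix (coinTournament σ) *ᵥ indicatorVec q.2}
  have hbad : ∀ q ∈ small ×ˢ small,
      (fairCoins (V × V)).real (bad q) ≤ Real.exp (-t ^ 2 / (2 * m ^ 2)) := by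
    intro q hq
    have hcard : #q.1 ≤ m ∧ #q.2 ≤ m := by simpa [small] using hq
    exact fairCoins_real_indicatorVec_ge_le hcard.1 hcard.2 ht
  have hsmall : (#small : ℝ) < Real.exp ((m + 1) * Real.log (Fintype.card V)) := by
    have hpos : (0 : ℝ) < Fintype.card V := by exact_mod_cast Fintype.card_pos
    rw [mul_comm, ← Real.rpow_def_of_pos hpos]
    exact_mod_cast card_filter_card_le_lt m
  have hunion : ∑ q ∈ small ×ˢ small, (fairCoins (V × V)).real (bad q) < 1 := by
    calc ∑ q ∈ small ×ˢ small, (fairCoins (V × V)).real (bad q)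
        ≤ #small * #small * Real.exp (-t ^ 2 / (2 * m ^ 2)) := by
          simpa [card_product] using sum_le_card_nsmul _ _ _ hbad
      _ < Real.exp ((m + 1) * Real.log (Fintype.card V)) *
            Real.exp ((m + 1) * Real.log (Fintype.card V)) *
            Real.exp (-t ^ 2 / (2 * m ^ 2)) := by gcongr
      _ ≤ 1 := by
          rw [← Real.exp_add, ← Real.exp_add, Real.exp_le_one_iff, neg_div]
          linarith
  obtain ⟨σ, hσ⟩ := exists_forall_notMem_of_sum_measureReal_lt_one hunion
  refine ⟨coinTournament σ, isTournament_coinTournament σ, fun S T hS hT => ?_⟩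
  exact (not_le.1 (hσ (S, T) (by simp [small, hS, hT]))).le

lemma two_mul_sum_arcs_le {R : Digraph V} (hR : R.IsTournament) {f g : V → ℝ}
    (hf : ∀ i, 0 ≤ f i) (hg : ∀ i, 0 ≤ g i) :
    2 * (∑ i, ∑ j, if R.Adj i j then f i * g j else 0) ≤
      (∑ i, f i) * ∑ j, g j + f ⬝ᵥ skewAdjMatrix R *ᵥ g := by
  have hterm (i j : V) : 2 * (if R.Adj i j then f i * g j else 0) ≤
      f i * g j + f i * (skewAdjMatrix R i j * g j) := by
    have hfg : 0 ≤ f i * g j := mul_nonneg (hf i) (hg j)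
    have hasymm : R.Adj i j → ¬ R.Adj j i := fun h =>
      (hR.2 i j fun hij => hR.1 i (hij ▸ h)).1 h
    by_cases hij : R.Adj i j
    · simp [skewAdjMatrix, hij, hasymm hij, two_mul]
    · by_cases hji : R.Adj j i <;> simp [skewAdjMatrix, hij, hji, hfg]
  calc 2 * (∑ i, ∑ j, if R.Adj i j then f i * g j else 0)
      = ∑ i, ∑ j, 2 * (if R.Adj i j then f i * g j else 0) := by simp only [mul_sum]
    _ ≤ ∑ i, ∑ j, (f i * g j + f i * (skewAdjMatrix R i j * g j)) :=
        sum_le_sum fun i _ => sum_le_sum fun j _ => hterm i j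
    _ = (∑ i, f i) * ∑ j, g j + f ⬝ᵥ skewAdjMatrix R *ᵥ g := by
        rw [sum_mul_sum]
        simp only [sum_add_distrib, dotProduct, mulVec, mul_sum]

lemma exists_isTournament_forall_sum_le [Nontrivial V] {m : ℕ} {t : ℝ} (ht : 0 ≤ t)
    (hmt : 2 * (m + 1) * Real.log (Fintype.card V) ≤ t ^ 2 / (2 * m ^ 2)) :
    ∃ R : Digraph V, R.IsTournament ∧
      ∀ f g : V → ℝ,
        (∀ i, 0 ≤ f i) → (∀ i, f i ≤ 1) → (∀ i, 0 ≤ g i) → (∀ i, g i ≤ 1) →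
        ∑ i, f i ≤ m → ∑ i, g i ≤ m →
        2 * (∑ i, ∑ j, if R.Adj i j then f i * g j else 0) ≤ (∑ i, f i) * ∑ i, g i + t := by
  obtain ⟨R, hR, hsets⟩ := exists_isTournament_forall_card_le ht hmt
  refine ⟨R, hR, fun f g hf₀ hf₁ hg₀ hg₁ hf hg => ?_⟩
  obtain ⟨S, T, hS, hT, hround⟩ :=
    exists_card_le_dotProduct_mulVec_le (skewAdjMatrix R) hf₀ hf₁ hf hg₀ hg₁ hg
  linarith [two_mul_sum_arcs_le hR hf₀ hg₀, hsets S T hS hT]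

lemma union_bound_exponent_le {L ε x m : ℝ} (hL : 0 ≤ L) (hx : 4 ≤ x) (hm : 0 < m)
    (hmx : m ≤ 2 * x + 1) (hLx : 16 * L ≤ ε ^ 2 * x) :
    2 * (m + 1) * L ≤ (2 * ε * x ^ 2) ^ 2 / (2 * m ^ 2) := by
  rw [le_div_iff₀ (by positivity)]
  have hm_le : m + 1 ≤ 5 / 2 * x := by linarith
  calc 2 * (m + 1) * L * (2 * m ^ 2)
      ≤ 2 * (5 / 2 * x) * L * (2 * (5 / 2 * x) ^ 2) := by
        gcongr
        linarith
    _ = 125 / 32 * x ^ 3 * (16 * L) := by ring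
    _ ≤ 4 * x ^ 3 * (ε ^ 2 * x) := by
        gcongr
        norm_num
    _ = (2 * ε * x ^ 2) ^ 2 := by ring

theorem random_tournament_host_general [Nontrivial V] {ε x : ℝ} (hε₀ : 0 < ε) (hε₁ : ε ≤ 1)
    (hx : 16 * Real.log (Fintype.card V) ≤ ε ^ 2 * x) :
    ∃ R : Digraph V, R.IsTournament ∧
      ∀ f g : V → ℝ,
        (∀ i, 0 ≤ f i) → (∀ i, f i ≤ 1) → (∀ i, 0 ≤ g i) → (∀ i, g i ≤ 1) →
        (∑ i, (f i + g i)) ≤ 2 * x →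
        (∑ i, ∑ j, if R.Adj i j then f i * g j else 0) ≤ (1 / 2 + ε) * x ^ 2 := by
  have hlog : Real.log 2 ≤ Real.log (Fintype.card V) :=
    Real.log_le_log two_pos (by exact_mod_cast Fintype.one_lt_card)
  have hx_large : 4 ≤ x := by nlinarith [Real.log_two_gt_d9]
  obtain ⟨m, hxm, hmx⟩ : ∃ m : ℕ, 2 * x ≤ m ∧ (m : ℝ) < 2 * x + 1 :=
    ⟨⌈2 * x⌉₊, Nat.le_ceil _, Nat.ceil_lt_add_one (by linarith)⟩
  obtain ⟨R, hR, hbound⟩ := exists_isTournament_forall_sum_le (V := V) (t := 2 * ε * x ^ 2)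
    (by positivity)
    (union_bound_exponent_le (Real.log_natCast_nonneg _) hx_large (by linarith) hmx.le hx)
  refine ⟨R, hR, fun f g hf₀ hf₁ hg₀ hg₁ hsum => ?_⟩
  rw [sum_add_distrib] at hsum
  have hf : 0 ≤ ∑ i, f i := sum_nonneg fun i _ => hf₀ i
  have hg : 0 ≤ ∑ i, g i := sum_nonneg fun i _ => hg₀ i
  have hprod : (∑ i, f i) * ∑ i, g i ≤ x ^ 2 := by
    nlinarith [sq_nonneg (∑ i, f i - ∑ i, g i)]
  linarith [hbound f g hf₀ hf₁ hg₀ hg₁ (by linarith) (by linarith)]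

end Existence

/-- For `k ≥ 2` and `x ≥ (10⁸ log k)/2`, there is a tournament `R` on
`[k]` such that for all weight functions `f, g : [k] → [0,1]` with `f + g ≤ 1` and
`Σᵢ (f i + g i) = 2x`, the weight `Σ_{(i,j) ∈ E(R)} f i · g j` is at most `0.51 x²`. -/
theorem random_tournament_host (k : ℕ) (hk : 2 ≤ k) (x : ℝ)
    (hx : 10 ^ 8 * Real.log k / 2 ≤ x) :
    ∃ R : Digraph (Fin k), R.IsTournament ∧
      ∀ f g : Fin k → ℝ,
        (∀ i, 0 ≤ f i) → (∀ i, f i ≤ 1) → (∀ i, 0 ≤ g i) → (∀ i, g i ≤ 1) →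
        (∀ i, f i + g i ≤ 1) →
        (∑ i, (f i + g i)) = 2 * x →
        (∑ i, ∑ j, if R.Adj i j then f i * g j else 0) ≤ 0.51 * x ^ 2 := by
  have : Nontrivial (Fin k) := Fin.nontrivial_iff_two_le.2 hk
  obtain ⟨R, hR, hbound⟩ := random_tournament_host_general (V := Fin k) (ε := 0.01) (x := x)
    (by norm_num) (by norm_num) (by rw [Fintype.card_fin]; linarith [Real.log_natCast_nonneg k])
  exact ⟨R, hR, fun f g hf₀ hf₁ hg₀ hg₁ _ hsum =>
    (hbound f g hf₀ hf₁ hg₀ hg₁ hsum.le).trans (by norm_num)⟩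
end

section
/- There exist constants c' > 1 and Δ₀ such that for all integers Δ ≥ Δ₀ and n ≥ Δ the following holds. There exist a bipartite digraph D₀ with vertex classes A and B with |A| = |B| ≤ n, maximum degree at most Δ, and all edges directed from A to B, together with a tournament R on at least (c')^Δ·n vertices, such that for all A' ⊆ A and B' ⊆ B: (1) if |A'|, |B'| ≥ 0.98·|A|, then R contains no copy of the induced subdigraph D₀[A' ∪ B']; and (2) if |A'|, |B'| ≥ 0.01·|A|, then D₀ has at least one edge directed from A' to B'. -/
/-- The degree of a vertex in the underlying undirected graph of a digraph. -/
noncomputable def Digraph.degree {V : Type*} (G : Digraph V) (v : V) : ℕ :=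
  Nat.card {u : V | G.Adj v u ∨ G.Adj u v}

/-!
Take a random tournament `T` on `2 ^ u` vertices, where `u` is a small constant times `Δ`, and let
`R` be its blow-up in which every vertex becomes a transitive tournament on `s ≈ n / (32 * u)`
vertices; `R` has about `2 ^ u * n / (32 * u)` vertices. Let `D₀` be the union of `Δ` random perfect
matchings from `A` to `B`.

A copy of a large part of `D₀` in `R` projects to maps `φ : A' → V(T)` and `ψ : B' → V(T)` with
fibres of size at most `s`. Since `T` has many edges in both directions between any two disjoint
sets of `8 * u` vertices, a positive proportion of the pairs `(a, b)` are back pairs, meaning that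
`ψ b → φ a` in `T`, and `D₀` can contain none of these. A single random matching avoids a fixed
dense set of pairs with probability exponentially small in `n`, so `D₀` avoids it with probability
`exp (-Ω (Δ * n))`, which beats the `2 ^ O (u * n)` choices of `(φ, ψ, A', B')`.
-/

open Finset Equiv

/-! ### Counting tools -/

lemma exists_forall_not_of_card_mul_lt_one {Ω W : Type*} [Fintype Ω] [Nonempty Ω] (S : Finset W)
    (bad : W → Ω → Prop) [∀ w, DecidablePred (bad w)] {δ : ℝ}
    (hbad : ∀ w ∈ S, (#{ω | bad w ω} : ℝ) ≤ δ * Fintype.card Ω) (hδ : #S * δ < 1) :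
    ∃ ω, ∀ w ∈ S, ¬ bad w ω := by
  classical
  by_contra! hcon
  have hcover : (univ : Finset Ω) ⊆ S.biUnion fun w ↦ {ω | bad w ω} := fun ω _ ↦ by
    simpa using hcon ω
  have hcard : (Fintype.card Ω : ℝ) ≤ (#S * δ) * Fintype.card Ω :=
    calc (Fintype.card Ω : ℝ) ≤ ∑ w ∈ S, (#{ω | bad w ω} : ℝ) := by
          exact_mod_cast (card_le_card hcover).trans card_biUnion_le
      _ ≤ #S • (δ * Fintype.card Ω) := sum_le_card_nsmul _ _ _ hbad
      _ = (#S * δ) * Fintype.card Ω := by rw [nsmul_eq_mul, mul_assoc]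
  have hpos : (0 : ℝ) < Fintype.card Ω := by exact_mod_cast Fintype.card_pos
  nlinarith

-- Chernoff's method: the right-hand side is the sum over all `c` of `t ^ #{y ∈ Y | c y = b y}`.
lemma card_agreements_le_mul_pow_le {ι : Type*} [Fintype ι] [DecidableEq ι] (Y : Finset ι)
    (b : ι → Bool) {t : ℝ} (ht₀ : 0 ≤ t) (ht₁ : t ≤ 1) (r : ℕ) :
    (#{c : ι → Bool | #{y ∈ Y | c y = b y} ≤ r} : ℝ) * t ^ r
      ≤ ((1 + t) / 2) ^ #Y * Fintype.card (ι → Bool) := by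
  have hweight (c : ι → Bool) :
      ∏ y, (if y ∈ Y ∧ c y = b y then t else 1) = t ^ #{y ∈ Y | c y = b y} := by
    rw [prod_ite, prod_const, prod_const_one, mul_one]
    congr 2
    ext y
    simp
  have hfactor (y : ι) : ∑ v : Bool, (if y ∈ Y ∧ v = b y then t else 1)
      = 2 * (if y ∈ Y then (1 + t) / 2 else 1) := by
    by_cases hy : y ∈ Y <;> cases b y <;> simp [hy] <;> ring
  rw [← nsmul_eq_mul]
  calc #{c : ι → Bool | #{y ∈ Y | c y = b y} ≤ r} • t ^ r
      ≤ ∑ c : ι → Bool with #{y ∈ Y | c y = b y} ≤ r, t ^ #{y ∈ Y | c y = b y} :=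
        card_nsmul_le_sum _ _ _ fun c hc ↦ pow_le_pow_of_le_one ht₀ ht₁ (mem_filter.1 hc).2
    _ ≤ ∑ c : ι → Bool, t ^ #{y ∈ Y | c y = b y} :=
        sum_le_sum_of_subset_of_nonneg (filter_subset _ _) fun _ _ _ ↦ by positivity
    _ = ∏ y, ∑ v : Bool, (if y ∈ Y ∧ v = b y then t else 1) := by
        simp_rw [← hweight, prod_univ_sum, Fintype.piFinset_univ]
    _ = ((1 + t) / 2) ^ #Y * Fintype.card (ι → Bool) := by
        simp_rw [hfactor, prod_mul_distrib, prod_ite_mem, univ_inter, prod_const, card_univ,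
          Fintype.card_fun, Fintype.card_bool]
        push_cast
        ring

lemma card_filter_comp_le {β V : Type*} [Fintype V] [DecidableEq V] {ψ : β → V} {B : Finset β}
    {s : ℕ} (hψ : ∀ v, #{b ∈ B | ψ b = v} ≤ s) (p : V → Prop) [DecidablePred p] :
    #{b ∈ B | p (ψ b)} ≤ s * #{v | p v} := by
  refine card_le_mul_card_image_of_maps_to (f := ψ) (fun b hb ↦ ?_) s fun v _ ↦ ?_
  · simpa using (mem_filter.1 hb).2
  · exact (card_le_card (filter_subset_filter _ (filter_subset _ _))).trans (hψ v)

/-! ### Tournaments without sparse pairs -/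

section Tournament

variable {V : Type*}

/-- The tournament on a linear order `V` coded by `c`: the edge between `i < j` points from `i`
to `j` exactly when `c s(i, j) = true`. A uniformly random `c` gives a uniformly random
tournament. -/
def orientation [LinearOrder V] (c : Sym2 V → Bool) : Digraph V where
  Adj i j := i ≠ j ∧ c s(i, j) = decide (i < j)

instance [LinearOrder V] (c : Sym2 V → Bool) : DecidableRel (orientation c).Adj :=
  fun i j ↦ inferInstanceAs (Decidable (i ≠ j ∧ c s(i, j) = decide (i < j)))

lemma orientation_isTournament [LinearOrder V] (c : Sym2 V → Bool) :
    (orientation c).IsTournament := by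
  refine ⟨fun v hv ↦ hv.1 rfl, fun i j hij ↦ ?_⟩
  simp only [orientation, Sym2.eq_swap (a := j), hij, hij.symm, ne_eq, not_false_eq_true, true_and]
  rcases lt_or_gt_of_ne hij with h | h <;> simp [h, h.not_gt]

lemma exists_adj_of_isTournament [Nontrivial V] {T : Digraph V} (hT : T.IsTournament) :
    ∃ v w, T.Adj v w := by
  obtain ⟨v, w, hvw⟩ := exists_pair_ne V
  by_cases h : T.Adj w v
  exacts [⟨w, v, h⟩, ⟨v, w, (hT.2 v w hvw).2 h⟩]

/-- A quasirandomness condition on `T` at scale `u`: into any set `I` of `8 * u` vertices, all but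
at most `16 * u` vertices send more than an eighth of the possible edges. -/
def IsOutSpread [Fintype V] (T : Digraph V) [DecidableRel T.Adj] (u : ℕ) : Prop :=
  ∀ I : Finset V, #I = 8 * u → #{j | #{i ∈ I | T.Adj j i} ≤ u} ≤ 16 * u

lemma card_orientation_edges_le_mul_pow_le [Fintype V] [LinearOrder V] {I J : Finset V}
    (hIJ : Disjoint I J) {t : ℝ} (ht₀ : 0 ≤ t) (ht₁ : t ≤ 1) (r : ℕ) :
    (#{c : Sym2 V → Bool | ∑ j ∈ J, #{i ∈ I | (orientation c).Adj j i} ≤ r} : ℝ) * t ^ r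
      ≤ ((1 + t) / 2) ^ (#J * #I) * Fintype.card (Sym2 V → Bool) := by
  have hne {j i : V} (hj : j ∈ J) (hi : i ∈ I) : j ≠ i := fun h ↦
    disjoint_left.1 hIJ hi (h ▸ hj)
  have hinj : Set.InjOn (fun p : V × V ↦ s(p.1, p.2)) (J ×ˢ I : Finset (V × V)) := by
    rintro ⟨j, i⟩ hp ⟨j', i'⟩ hp' h
    rw [mem_coe, mem_product] at hp hp'
    rcases Sym2.eq_iff.1 h with ⟨rfl, rfl⟩ | ⟨rfl, -⟩
    exacts [rfl, (hne hp.1 hp'.2 rfl).elim]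
  have hedges (c : Sym2 V → Bool) :
      #{y ∈ (J ×ˢ I).image fun p ↦ s(p.1, p.2) | c y = decide (y.inf ∈ J)}
        = ∑ j ∈ J, #{i ∈ I | (orientation c).Adj j i} := by
    rw [filter_image, card_image_of_injOn (hinj.mono (coe_subset.2 (filter_subset _ _))),
      card_filter, sum_product]
    simp_rw [card_filter]
    refine sum_congr rfl fun j hj ↦ sum_congr rfl fun i hi ↦ if_congr ?_ rfl rfl
    have hiJ : i ∉ J := disjoint_left.1 hIJ hi
    rcases lt_or_gt_of_ne (hne hj hi) with h | h <;>
      simp [orientation, hne hj hi, h, h.le, h.not_gt, hj, hiJ]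
  have := card_agreements_le_mul_pow_le ((J ×ˢ I).image fun p ↦ s(p.1, p.2))
    (fun y ↦ decide (y.inf ∈ J)) ht₀ ht₁ r
  simpa only [hedges, card_image_of_injOn hinj, card_product] using this

lemma card_orientation_sparse_le [Fintype V] [LinearOrder V] {u : ℕ} {I J : Finset V}
    (hIJ : Disjoint I J) (hI : #I = 8 * u) (hJ : #J = 8 * u) :
    (#{c : Sym2 V → Bool | ∑ j ∈ J, #{i ∈ I | (orientation c).Adj j i} ≤ 8 * u * u} : ℝ)
      ≤ (1 / 8) ^ (8 * u * u) * Fintype.card (Sym2 V → Bool) := by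
  have hchernoff := card_orientation_edges_le_mul_pow_le hIJ (t := 1 / 4) (by norm_num)
    (by norm_num) (8 * u * u)
  have hpow : ((1 + 1 / 4) / 2 : ℝ) ^ (#J * #I)
      ≤ (1 / 8) ^ (8 * u * u) * (1 / 4) ^ (8 * u * u) := by
    rw [hI, hJ, show 8 * u * (8 * u) = 8 * (8 * u * u) by ring, pow_mul, ← mul_pow]
    gcongr
    norm_num
  refine le_of_mul_le_mul_right ?_ (show (0 : ℝ) < (1 / 4) ^ (8 * u * u) by positivity)
  calc _ ≤ _ := hchernoff
    _ ≤ _ := mul_le_mul_of_nonneg_right hpow (Nat.cast_nonneg _)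
    _ = _ := by ring

lemma exists_orientation_forall_disjoint_lt_edges [Fintype V] [LinearOrder V] {u : ℕ} (hu : 0 < u)
    (hV : Fintype.card V ≤ 2 ^ u) :
    ∃ c : Sym2 V → Bool, ∀ I J : Finset V, Disjoint I J → #I = 8 * u → #J = 8 * u →
      8 * u * u < ∑ j ∈ J, #{i ∈ I | (orientation c).Adj j i} := by
  let S : Finset (Finset V × Finset V) :=
    {p ∈ powersetCard (8 * u) univ ×ˢ powersetCard (8 * u) univ | Disjoint p.1 p.2}
  have hsubsets : #(powersetCard (8 * u) (univ : Finset V)) ≤ 2 ^ (8 * u * u) :=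
    calc #(powersetCard (8 * u) (univ : Finset V)) ≤ Fintype.card V ^ (8 * u) := by
          rw [card_powersetCard]
          exact Nat.choose_le_pow _ _
      _ ≤ (2 ^ u) ^ (8 * u) := by gcongr
      _ = 2 ^ (8 * u * u) := by rw [← pow_mul, mul_comm]
  have hS : #S ≤ 4 ^ (8 * u * u) :=
    calc #S ≤ 2 ^ (8 * u * u) * 2 ^ (8 * u * u) :=
          (card_filter_le _ _).trans (card_product _ _ ▸ Nat.mul_le_mul hsubsets hsubsets)
      _ = 4 ^ (8 * u * u) := (mul_pow 2 2 _).symm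
  have hsmall : (#S : ℝ) * (1 / 8) ^ (8 * u * u) < 1 :=
    calc (#S : ℝ) * (1 / 8) ^ (8 * u * u) ≤ 4 ^ (8 * u * u) * (1 / 8) ^ (8 * u * u) := by
          gcongr
          exact_mod_cast hS
      _ = (1 / 2) ^ (8 * u * u) := by rw [← mul_pow]; norm_num
      _ < 1 := pow_lt_one₀ (by norm_num) (by norm_num) (by positivity)
  obtain ⟨c, hc⟩ := exists_forall_not_of_card_mul_lt_one S
    (fun p (c : Sym2 V → Bool) ↦ ∑ j ∈ p.2, #{i ∈ p.1 | (orientation c).Adj j i} ≤ 8 * u * u)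
    (fun p hp ↦ by
      simp only [S, mem_filter, mem_product, mem_powersetCard_univ] at hp
      exact card_orientation_sparse_le hp.2 hp.1.1 hp.1.2) hsmall
  exact ⟨c, fun I J hIJ hI hJ ↦ not_le.1 (hc (I, J) (by simp [S, hIJ, hI, hJ]))⟩

lemma exists_orientation_isOutSpread [Fintype V] [LinearOrder V] {u : ℕ} (hu : 0 < u)
    (hV : Fintype.card V ≤ 2 ^ u) : ∃ c : Sym2 V → Bool, IsOutSpread (orientation c) u := by
  obtain ⟨c, hc⟩ := exists_orientation_forall_disjoint_lt_edges hu hV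
  refine ⟨c, fun I hI ↦ ?_⟩
  by_contra! hlarge
  obtain ⟨J, hJsub, hJ⟩ := exists_subset_card_eq
    (show 8 * u ≤ #(({j | #{i ∈ I | (orientation c).Adj j i} ≤ u} : Finset V) \ I) by
      have := le_card_sdiff I {j | #{i ∈ I | (orientation c).Adj j i} ≤ u}
      omega)
  refine (hc I J (disjoint_of_subset_right hJsub disjoint_sdiff) hI hJ).not_ge ?_
  calc ∑ j ∈ J, #{i ∈ I | (orientation c).Adj j i} ≤ #J • u :=
        sum_le_card_nsmul _ _ _ fun j hj ↦ (mem_filter.1 (mem_sdiff.1 (hJsub hj)).1).2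
    _ = 8 * u * u := by rw [hJ, smul_eq_mul]

/-- The blow-up of `T` along `f : X → V`: each vertex `v` of `T` is replaced by the fibre
`f ⁻¹' {v}`, and each fibre carries the transitive tournament given by the order of `X`. -/
def blowup {X : Type*} [LinearOrder X] (T : Digraph V) (f : X → V) : Digraph X where
  Adj x y := T.Adj (f x) (f y) ∨ f x = f y ∧ x < y

lemma blowup_isTournament {X : Type*} [LinearOrder X] {T : Digraph V} (hT : T.IsTournament)
    (f : X → V) : (blowup T f).IsTournament := by
  refine ⟨fun x hx ↦ hx.elim (hT.1 _) fun h ↦ h.2.false, fun x y hxy ↦ ?_⟩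
  by_cases hf : f x = f y
  · simp only [blowup, hf, hT.1, false_or, true_and, not_lt, hxy.le_iff_lt]
  · simpa only [blowup, hf, Ne.symm hf, false_and, or_false] using hT.2 _ _ hf

lemma not_adj_of_blowup_adj {X : Type*} [LinearOrder X] {T : Digraph V} (hT : T.IsTournament)
    {f : X → V} {x y : X} (h : (blowup T f).Adj x y) : ¬ T.Adj (f y) (f x) := fun hyx ↦ by
  have hne : f y ≠ f x := fun heq ↦ hT.1 _ (heq ▸ hyx)
  exact h.elim ((hT.2 _ _ hne).1 hyx) fun h ↦ hne h.1.symm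

lemma card_fin_divNat_eq_le {k s : ℕ} (v : Fin k) :
    #{x : Fin (k * s) | x.divNat = v} ≤ s :=
  calc #{x : Fin (k * s) | x.divNat = v} ≤ #(univ : Finset (Fin s)) := by
        refine card_le_card_of_injOn Fin.modNat (fun _ _ ↦ mem_coe.2 (mem_univ _)) ?_
        intro x hx y hy hxy
        simp only [coe_filter, mem_univ, true_and, Set.mem_ofPred_eq] at hx hy
        exact finProdFinEquiv.symm.injective (Prod.ext (hx.trans hy.symm) hxy)
    _ = s := Finset.card_fin s

end Tournament

/-! ### Random matchings -/

section Matchings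

variable {α κ : Type*}

/-- The set family `F`, read as the rows of a bipartite graph between two copies of `α`, has at
least an `ε`-fraction of rows that are themselves of density at least `ε`. -/
def HasDenseRows [Fintype α] (ε : ℝ) (F : α → Finset α) : Prop :=
  ε * Fintype.card α ≤ #{a | ε * Fintype.card α ≤ #(F a)}

lemma card_perm_eqOn_le [Fintype α] [DecidableEq α] (S : Finset α) (f : α → α) :
    #{π : Perm α | ∀ a ∈ S, π a = f a} ≤ (Fintype.card α - #S).factorial := by
  rcases Finset.eq_empty_or_nonempty {π : Perm α | ∀ a ∈ S, π a = f a} with hempty | ⟨π₀, hπ₀⟩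
  · simp [hempty]
  rw [mem_filter_univ] at hπ₀
  calc #{π : Perm α | ∀ a ∈ S, π a = f a} ≤ #{g : Perm α | ∀ a, ¬ a ∉ S → g a = a} := by
        refine card_le_card_of_injOn (π₀⁻¹ * ·) ?_ (mul_right_injective _).injOn
        intro π hπ
        simp only [coe_filter, mem_univ, true_and, Set.mem_ofPred_eq, not_not] at hπ ⊢
        intro a ha
        rw [Perm.mul_apply, hπ a ha, Perm.inv_eq_iff_eq, hπ₀ a ha]
    _ = Fintype.card (Perm {a // a ∉ S}) := by
        rw [← Fintype.card_subtype, Fintype.card_congr (Perm.subtypeEquivSubtypePerm (· ∉ S))]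
    _ = (Fintype.card α - #S).factorial := by
        rw [Fintype.card_perm, Fintype.card_subtype_compl, Fintype.card_coe]

lemma card_perm_forall_mem_le [Fintype α] [DecidableEq α] (S : Finset α) (F : α → Finset α) :
    #{π : Perm α | ∀ a ∈ S, π a ∈ F a} ≤ (Fintype.card α - #S).factorial * ∏ a ∈ S, #(F a) := by
  let restriction (π : Perm α) : ∀ a ∈ S, α := fun a _ ↦ π a
  have hmaps : ∀ π ∈ ({π | ∀ a ∈ S, π a ∈ F a} : Finset (Perm α)), restriction π ∈ S.pi F :=
    fun π hπ ↦ mem_pi.2 (mem_filter.1 hπ).2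
  rw [← card_pi]
  refine card_le_mul_card_image_of_maps_to hmaps _ fun f _ ↦ ?_
  refine le_trans (card_le_card fun π hπ ↦ ?_)
    (card_perm_eqOn_le S fun a ↦ if ha : a ∈ S then f a ha else a)
  rw [mem_filter_univ]
  intro a ha
  rw [dif_pos ha, ← (mem_filter.1 hπ).2]

lemma pow_mul_factorial_sub_le {m r : ℕ} {ε : ℝ} (hε : ε ≤ 1) (hr : 2 * (r : ℝ) ≤ ε * m) :
    ((1 - ε) * m) ^ r * (m - r).factorial ≤ (1 - ε / 2) ^ r * (m.factorial : ℝ) := by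
  have hrm : r ≤ m := by
    have : (r : ℝ) ≤ m := by nlinarith [m.cast_nonneg (α := ℝ)]
    exact_mod_cast this
  have hdesc : ((1 - ε / 2) * m) ^ r ≤ (m.descFactorial r : ℝ) :=
    calc ((1 - ε / 2) * m) ^ r ≤ ((m + 1 - r : ℕ) : ℝ) ^ r := by
          rw [Nat.cast_sub (by omega)]
          push_cast
          gcongr
          · exact mul_nonneg (by linarith) m.cast_nonneg
          · linarith
      _ ≤ m.descFactorial r := by exact_mod_cast Nat.pow_sub_le_descFactorial m r
  calc ((1 - ε) * m) ^ r * (m - r).factorial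
      ≤ ((1 - ε / 2) * ((1 - ε / 2) * m)) ^ r * (m - r).factorial := by
        rw [← mul_assoc]
        gcongr
        nlinarith [sq_nonneg ε]
    _ = (1 - ε / 2) ^ r * ((m - r).factorial * ((1 - ε / 2) * m) ^ r) := by rw [mul_pow]; ring
    _ ≤ (1 - ε / 2) ^ r * ((m - r).factorial * m.descFactorial r) := by
        have : 0 ≤ 1 - ε / 2 := by linarith
        gcongr
    _ = (1 - ε / 2) ^ r * m.factorial := by
        rw [← Nat.cast_mul, Nat.factorial_mul_descFactorial hrm]

lemma HasDenseRows.card_perm_avoiding_le [Fintype α] [DecidableEq α] {ε : ℝ}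
    {F : α → Finset α} (hF : HasDenseRows ε F) (hε : ε ≤ 1) {r : ℕ}
    (hr : 2 * (r : ℝ) ≤ ε * Fintype.card α) :
    (#{π : Perm α | ∀ a, π a ∉ F a} : ℝ) ≤ (1 - ε / 2) ^ r * (Fintype.card α).factorial := by
  obtain ⟨S, hSsub, rfl⟩ := exists_subset_card_eq
    (show r ≤ #{a | ε * Fintype.card α ≤ #(F a)} by
      have : (r : ℝ) ≤ #{a | ε * Fintype.card α ≤ #(F a)} :=
        le_trans (by linarith [r.cast_nonneg (α := ℝ)]) hF
      exact_mod_cast this)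
  have hcompl : ∀ a ∈ S, (#(F a)ᶜ : ℝ) ≤ (1 - ε) * Fintype.card α := fun a ha ↦ by
    have := (mem_filter.1 (hSsub ha)).2
    rw [card_compl, Nat.cast_sub (card_le_univ _)]
    linarith
  calc (#{π : Perm α | ∀ a, π a ∉ F a} : ℝ)
      ≤ #{π : Perm α | ∀ a ∈ S, π a ∈ (F a)ᶜ} := by
        refine Nat.cast_le.2 (card_le_card fun π hπ ↦ ?_)
        simp only [mem_filter_univ, mem_compl] at hπ ⊢
        exact fun a _ ↦ hπ a
    _ ≤ (Fintype.card α - #S).factorial * ∏ a ∈ S, (#(F a)ᶜ : ℝ) := by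
        exact_mod_cast card_perm_forall_mem_le S fun a ↦ (F a)ᶜ
    _ ≤ (Fintype.card α - #S).factorial * ((1 - ε) * Fintype.card α) ^ #S := by
        rw [← prod_const]
        gcongr with a ha
        exact hcompl a ha
    _ ≤ (1 - ε / 2) ^ #S * (Fintype.card α).factorial := by
        rw [mul_comm]
        exact pow_mul_factorial_sub_le hε hr

lemma exists_perms_forall_hasDenseRows_meet {W : Type*} [Fintype α] [Fintype κ] [Fintype W]
    (F : W → α → Finset α) {ε : ℝ} (hε : ε ≤ 1) {r : ℕ}
    (hr : 2 * (r : ℝ) ≤ ε * Fintype.card α)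
    (hW : Fintype.card W * (1 - ε / 2) ^ (r * Fintype.card κ) < 1) :
    ∃ π : κ → Perm α, ∀ w, HasDenseRows ε (F w) → ∃ l a, π l a ∈ F w a := by
  classical
  obtain ⟨π, hπ⟩ := exists_forall_not_of_card_mul_lt_one {w | HasDenseRows ε (F w)}
    (fun w (π : κ → Perm α) ↦ ∀ l a, π l a ∉ F w a) (δ := (1 - ε / 2) ^ (r * Fintype.card κ))
    (fun w hw ↦ by
      have hsplit : ({π | ∀ l a, π l a ∉ F w a} : Finset (κ → Perm α))
          = Fintype.piFinset fun _ ↦ {π | ∀ a, π a ∉ F w a} := by ext; simp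
      rw [hsplit, Fintype.card_piFinset, prod_const, card_univ, Fintype.card_fun, Fintype.card_perm]
      push_cast
      rw [pow_mul, ← mul_pow]
      gcongr
      exact (mem_filter.1 hw).2.card_perm_avoiding_le hε hr)
    (lt_of_le_of_lt (by
      have : 0 ≤ 1 - ε / 2 := by linarith
      gcongr
      exact card_le_univ _) hW)
  exact ⟨π, fun w hw ↦ by simpa using hπ w (by simpa using hw)⟩

/-- The bipartite digraph on two copies of `α` (the sources on the left, the targets on the right)
which is the union of the perfect matchings `a ↦ π l a`. -/
def matchingUnion (π : κ → Perm α) : Digraph (α ⊕ α) where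
  Adj u v := ∃ l a, u = Sum.inl a ∧ v = Sum.inr (π l a)

lemma matchingUnion_adj_inl_inr {π : κ → Perm α} {a b : α} :
    (matchingUnion π).Adj (Sum.inl a) (Sum.inr b) ↔ ∃ l, π l a = b := by
  simp [matchingUnion, eq_comm]

lemma exists_inl_inr_of_matchingUnion_adj {π : κ → Perm α} {u v : α ⊕ α}
    (h : (matchingUnion π).Adj u v) : (∃ a, u = Sum.inl a) ∧ ∃ b, v = Sum.inr b := by
  obtain ⟨l, a, rfl, rfl⟩ := h
  exact ⟨⟨a, rfl⟩, ⟨π l a, rfl⟩⟩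

lemma matchingUnion_degree_le [Fintype κ] (π : κ → Perm α) (v : α ⊕ α) :
    (matchingUnion π).degree v ≤ Fintype.card κ := by
  obtain ⟨neighbor, hneighbor⟩ : ∃ f : κ → α ⊕ α,
      {u | (matchingUnion π).Adj v u ∨ (matchingUnion π).Adj u v} ⊆ Set.range f := by
    rcases v with a | b
    · refine ⟨fun l ↦ Sum.inr (π l a), ?_⟩
      rintro _ (⟨l, _, ⟨⟩, rfl⟩ | ⟨_, _, _, ⟨⟩⟩)
      exact ⟨l, rfl⟩
    · refine ⟨fun l ↦ Sum.inl ((π l).symm b), ?_⟩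
      rintro _ (⟨_, _, ⟨⟩, _⟩ | ⟨l, a, rfl, ⟨⟩⟩)
      exact ⟨l, by simp⟩
  calc (matchingUnion π).degree v ≤ Nat.card (Set.range neighbor) :=
        Nat.card_mono (Set.finite_range _) hneighbor
    _ ≤ Nat.card κ := Finite.card_range_le _
    _ = Fintype.card κ := Nat.card_eq_fintype_card

end Matchings

/-! ### Back pairs -/

section BackPairs

variable {α V : Type*}

/-- For maps `φ, ψ` placing the classes `A, B` of a bipartite digraph into `T`, the set of `b ∈ B`
such that `T` has an edge from `ψ b` to `φ a`, opposite to the direction an edge `a → b` would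
need; empty if `a ∉ A`. -/
def backNeighbors [DecidableEq α] (T : Digraph V) [DecidableRel T.Adj] (φ ψ : α → V)
    (A B : Finset α) (a : α) : Finset α :=
  {b ∈ B | a ∈ A ∧ T.Adj (ψ b) (φ a)}

/-- The bipartite digraph `D` has an edge among the back pairs of every placement of its classes
into `T` for which the back pairs have dense rows. -/
def MeetsDenseBackPairs [Fintype α] [DecidableEq α] (D : Digraph (α ⊕ α)) (T : Digraph V)
    [DecidableRel T.Adj] (ε : ℝ) : Prop :=
  ∀ (φ ψ : α → V) (A B : Finset α), HasDenseRows ε (backNeighbors T φ ψ A B) →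
    ∃ a ∈ A, ∃ b ∈ B, D.Adj (Sum.inl a) (Sum.inr b) ∧ T.Adj (ψ b) (φ a)

lemma exists_meetsDenseBackPairs {κ : Type*} [Fintype α] [DecidableEq α] [Fintype κ] [Fintype V]
    (T : Digraph V) [DecidableRel T.Adj] {ε : ℝ} (hε : ε ≤ 1) {r : ℕ}
    (hr : 2 * (r : ℝ) ≤ ε * Fintype.card α)
    (hsmall : (2 * Fintype.card V : ℝ) ^ (2 * Fintype.card α)
      * (1 - ε / 2) ^ (r * Fintype.card κ) < 1) :
    ∃ π : κ → Perm α, MeetsDenseBackPairs (matchingUnion π) T ε := by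
  classical
  have hcard : (Fintype.card ((α → V) × (α → V) × Finset α × Finset α) : ℝ)
      = (2 * Fintype.card V : ℝ) ^ (2 * Fintype.card α) := by
    simp only [Fintype.card_prod, Fintype.card_fun, Fintype.card_finset]
    push_cast
    ring
  obtain ⟨π, hπ⟩ := exists_perms_forall_hasDenseRows_meet (κ := κ)
    (fun w : (α → V) × (α → V) × Finset α × Finset α ↦
      backNeighbors T w.1 w.2.1 w.2.2.1 w.2.2.2) hε hr (hcard ▸ hsmall)
  refine ⟨π, fun φ ψ A B hdense ↦ ?_⟩
  obtain ⟨l, a, hla⟩ := hπ (φ, ψ, A, B) hdense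
  obtain ⟨hB, hA, hadj⟩ := mem_filter.1 hla
  exact ⟨a, hA, π l a, hB, matchingUnion_adj_inl_inr.2 ⟨l, rfl⟩, hadj⟩

-- Placing all of `A` at one end of an edge of `T` and all of `B` at the other makes every pair in
-- `A × B` a back pair.
lemma MeetsDenseBackPairs.exists_adj [Fintype α] [DecidableEq α] {D : Digraph (α ⊕ α)}
    {T : Digraph V} [DecidableRel T.Adj] {ε : ℝ} (hD : MeetsDenseBackPairs D T ε)
    (hT : ∃ v w, T.Adj v w) {A B : Finset α} (hA : ε * Fintype.card α ≤ #A)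
    (hB : ε * Fintype.card α ≤ #B) : ∃ a ∈ A, ∃ b ∈ B, D.Adj (Sum.inl a) (Sum.inr b) := by
  obtain ⟨v, w, hvw⟩ := hT
  have hdense : HasDenseRows ε (backNeighbors T (fun _ ↦ w) (fun _ ↦ v) A B) := by
    refine hA.trans (Nat.cast_le.2 (card_le_card fun a ha ↦ ?_))
    simpa [backNeighbors, ha, hvw] using hB
  obtain ⟨a, ha, b, hb, hab, -⟩ := hD _ _ A B hdense
  exact ⟨a, ha, b, hb, hab⟩

-- Double counting the edges into `8 * u` violating vertices leaves most of `B` sending at most `u`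
-- edges to them; such elements of `B` occupy at most `16 * u` fibres of `ψ`.
lemma IsOutSpread.card_few_inNeighbors_lt {β : Type*} [Fintype V] [DecidableEq V] {T : Digraph V}
    [DecidableRel T.Adj] {u s : ℕ} (hT : IsOutSpread T u) (hu : 0 < u) {ψ : β → V} {B : Finset β}
    (hψ : ∀ v, #{b ∈ B | ψ b = v} ≤ s) {δ : ℝ} (hB : 8 * δ + 16 * u * s < #B) :
    #{i | (#{b ∈ B | T.Adj (ψ b) i} : ℝ) < δ} < 8 * u := by
  by_contra! hlarge
  obtain ⟨I, hIsub, hI⟩ := exists_subset_card_eq hlarge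
  have hhigh : (#{b ∈ B | u < #{i ∈ I | T.Adj (ψ b) i}} : ℝ) ≤ 8 * δ := by
    refine le_of_mul_le_mul_right ?_ (show (0 : ℝ) < u by exact_mod_cast hu)
    calc (#{b ∈ B | u < #{i ∈ I | T.Adj (ψ b) i}} : ℝ) * u
        ≤ ∑ b ∈ B, (#{i ∈ I | T.Adj (ψ b) i} : ℝ) := by
          norm_cast
          rw [← smul_eq_mul]
          refine (card_nsmul_le_sum _ _ u fun b hb ↦ (mem_filter.1 hb).2.le).trans
            (sum_le_sum_of_subset (filter_subset _ _))
      _ = ∑ i ∈ I, (#{b ∈ B | T.Adj (ψ b) i} : ℝ) := by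
          exact_mod_cast sum_card_bipartiteAbove_eq_sum_card_bipartiteBelow
            fun b i ↦ T.Adj (ψ b) i
      _ ≤ #I • δ := sum_le_card_nsmul _ _ _ fun i hi ↦ (mem_filter.1 (hIsub hi)).2.le
      _ = 8 * δ * u := by rw [hI, nsmul_eq_mul]; push_cast; ring
  have hlow : (#{b ∈ B | #{i ∈ I | T.Adj (ψ b) i} ≤ u} : ℝ) ≤ s * (16 * u) := by
    exact_mod_cast (card_filter_comp_le hψ _).trans (Nat.mul_le_mul_left s (hT I hI))
  have hsum : (#{b ∈ B | u < #{i ∈ I | T.Adj (ψ b) i}} : ℝ)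
      + #{b ∈ B | #{i ∈ I | T.Adj (ψ b) i} ≤ u} = #B := by
    simp_rw [← not_lt]
    exact_mod_cast card_filter_add_card_filter_not _
  linarith

lemma IsOutSpread.hasDenseRows_backNeighbors [Fintype α] [DecidableEq α] [Nonempty α] [Fintype V]
    [DecidableEq V] {T : Digraph V} [DecidableRel T.Adj] {u s : ℕ} (hT : IsOutSpread T u)
    (hu : 0 < u) (hs : 32 * u * s ≤ Fintype.card α) {φ ψ : α → V} {A B : Finset α}
    (hφ : ∀ v, #{a ∈ A | φ a = v} ≤ s) (hψ : ∀ v, #{b ∈ B | ψ b = v} ≤ s)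
    (hA : 0.98 * (Fintype.card α : ℝ) ≤ #A) (hB : 0.98 * (Fintype.card α : ℝ) ≤ #B) :
    HasDenseRows 0.01 (backNeighbors T φ ψ A B) := by
  have hs' : (32 * u * s : ℝ) ≤ Fintype.card α := by exact_mod_cast hs
  have hα : (0 : ℝ) < Fintype.card α := by exact_mod_cast Fintype.card_pos
  set δ : ℝ := 0.01 * Fintype.card α with hδ
  have hsparse := hT.card_few_inNeighbors_lt hu hψ (δ := δ) (by linarith)
  have hfew : (#{a ∈ A | (#{b ∈ B | T.Adj (ψ b) (φ a)} : ℝ) < δ} : ℝ) ≤ s * (8 * u) := by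
    exact_mod_cast (card_filter_comp_le hφ _).trans (Nat.mul_le_mul_left s hsparse.le)
  have hsum : (#{a ∈ A | (#{b ∈ B | T.Adj (ψ b) (φ a)} : ℝ) < δ} : ℝ)
      + #{a ∈ A | δ ≤ #{b ∈ B | T.Adj (ψ b) (φ a)}} = #A := by
    simp_rw [← not_lt (b := δ)]
    exact_mod_cast card_filter_add_card_filter_not _
  calc δ ≤ #{a ∈ A | δ ≤ #{b ∈ B | T.Adj (ψ b) (φ a)}} := by linarith
    _ ≤ #{a | δ ≤ #(backNeighbors T φ ψ A B a)} := by
        refine Nat.cast_le.2 (card_le_card fun a ha ↦ ?_)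
        obtain ⟨haA, ha⟩ := mem_filter.1 ha
        rw [mem_filter_univ]
        simpa only [backNeighbors, haA, true_and] using ha

lemma MeetsDenseBackPairs.not_exists_copy_blowup {X : Type*} [Fintype α] [DecidableEq α]
    [Nonempty α] [Fintype V] [DecidableEq V] [Fintype X] [LinearOrder X] {D : Digraph (α ⊕ α)}
    {T : Digraph V} [DecidableRel T.Adj] (hD : MeetsDenseBackPairs D T 0.01)
    (hT : T.IsTournament) {u s : ℕ} (hspread : IsOutSpread T u) (hu : 0 < u)
    (hs : 32 * u * s ≤ Fintype.card α) {f : X → V} (hf : ∀ v, #{x | f x = v} ≤ s)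
    {A B : Finset α} (hA : 0.98 * (Fintype.card α : ℝ) ≤ #A)
    (hB : 0.98 * (Fintype.card α : ℝ) ≤ #B) :
    ¬ ∃ φ : α ⊕ α → X,
        Set.InjOn φ ((Sum.inl '' (A : Set α)) ∪ (Sum.inr '' (B : Set α))) ∧
        ∀ u ∈ (Sum.inl '' (A : Set α)) ∪ (Sum.inr '' (B : Set α)),
          ∀ v ∈ (Sum.inl '' (A : Set α)) ∪ (Sum.inr '' (B : Set α)),
            D.Adj u v → (blowup T f).Adj (φ u) (φ v) := by
  rintro ⟨φ, hinj, hhom⟩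
  have hfiber {ι : α → α ⊕ α} (hι : ι.Injective) {C : Finset α}
      (hC : Set.MapsTo ι C ((Sum.inl '' (A : Set α)) ∪ (Sum.inr '' (B : Set α)))) (v : V) :
      #{c ∈ C | f (φ (ι c)) = v} ≤ s := by
    refine (card_le_card_of_injOn (φ ∘ ι) (fun c hc ↦ ?_) ?_).trans (hf v)
    · simpa using (mem_filter.1 (mem_coe.1 hc)).2
    · exact (hinj.comp hι.injOn hC).mono (coe_subset.2 (filter_subset _ _))
  obtain ⟨a, ha, b, hb, hab, hback⟩ := hD (fun a ↦ f (φ (Sum.inl a))) (fun b ↦ f (φ (Sum.inr b)))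
    A B (hspread.hasDenseRows_backNeighbors hu hs
      (hfiber Sum.inl_injective fun a ha ↦ Or.inl ⟨a, ha, rfl⟩)
      (hfiber Sum.inr_injective fun b hb ↦ Or.inr ⟨b, hb, rfl⟩) hA hB)
  exact not_adj_of_blowup_adj hT
    (hhom _ (Or.inl ⟨a, ha, rfl⟩) _ (Or.inr ⟨b, hb, rfl⟩) hab) hback

end BackPairs

/-! ### Numerical estimates -/

lemma mul_six_fifths_pow_le_two_pow {u : ℕ} (hu : 40 ≤ u) :
    (64 : ℝ) * u * (6 / 5) ^ u ≤ 2 ^ u := by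
  have hlinear : (64 : ℝ) * u ≤ (5 / 3) ^ u := by
    induction u, hu using Nat.le_induction with
    | base => norm_num
    | succ v hv ih =>
      have : (40 : ℝ) ≤ v := by exact_mod_cast hv
      rw [pow_succ]
      push_cast
      linarith
  calc (64 : ℝ) * u * (6 / 5) ^ u ≤ (5 / 3) ^ u * (6 / 5) ^ u := by gcongr
    _ = 2 ^ u := by rw [← mul_pow]; norm_num

lemma le_two_mul_mul_div {n k : ℕ} (hk : 0 < k) (hkn : k ≤ n) : n ≤ 2 * k * (n / k) := by
  have hlt : n < k * (n / k + 1) := Nat.lt_mul_div_succ n hk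
  have hpos : 1 ≤ n / k := (Nat.one_le_div_iff hk).2 hkn
  nlinarith

lemma exists_base_pow_mul_le {N : ℕ} (hN : 0 < N) :
    ∃ c : ℝ, 1 < c ∧ ∀ Δ n : ℕ, 40 * N ≤ Δ → 32 * (Δ / N) ≤ n →
      c ^ Δ * n ≤ (2 ^ (Δ / N) * (n / (32 * (Δ / N))) : ℕ) := by
  have h2N : ((2 * N : ℕ) : ℝ) ≠ 0 := by positivity
  have hc : 1 < (6 / 5 : ℝ) ^ (((2 * N : ℕ) : ℝ)⁻¹) :=
    Real.one_lt_rpow (by norm_num) (by positivity)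
  refine ⟨(6 / 5 : ℝ) ^ (((2 * N : ℕ) : ℝ)⁻¹), hc, fun Δ n hΔ hn ↦ ?_⟩
  have hu : 40 ≤ Δ / N := (Nat.le_div_iff_mul_le hN).2 hΔ
  have hΔu : Δ ≤ 2 * N * (Δ / N) := le_two_mul_mul_div hN (by omega)
  set u := Δ / N
  set s := n / (32 * u)
  have hpow : ((6 / 5 : ℝ) ^ (((2 * N : ℕ) : ℝ)⁻¹)) ^ Δ ≤ (6 / 5) ^ u := by
    refine (pow_le_pow_right₀ hc.le hΔu).trans_eq ?_
    rw [pow_mul, Real.rpow_inv_natCast_pow (by norm_num) (by exact_mod_cast h2N)]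
  have hn : (n : ℝ) ≤ 2 * (32 * u) * s := by exact_mod_cast le_two_mul_mul_div (by omega) hn
  calc ((6 / 5 : ℝ) ^ (((2 * N : ℕ) : ℝ)⁻¹)) ^ Δ * n
      ≤ (6 / 5) ^ u * (2 * (32 * u) * s) := by gcongr
    _ = (64 * u * (6 / 5) ^ u) * s := by ring
    _ ≤ 2 ^ u * s := by gcongr; exact mul_six_fifths_pow_le_two_pow hu
    _ = (2 ^ u * s : ℕ) := by push_cast; rfl

lemma two_mul_two_pow_pow_mul_lt_one {n u Δ : ℕ} (hn : 200 ≤ n) (hu : 0 < u)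
    (hΔ : 640000 * u ≤ Δ) :
    (2 * 2 ^ u : ℝ) ^ (2 * n) * (1 - 0.01 / 2) ^ (n / 200 * Δ) < 1 := by
  have hexp : 200 * (8 * n * u) ≤ n / 200 * Δ :=
    calc 200 * (8 * n * u) = n * (1600 * u) := by ring
      _ ≤ (2 * 200 * (n / 200)) * (1600 * u) :=
        Nat.mul_le_mul_right _ (le_two_mul_mul_div (by norm_num) hn)
      _ = n / 200 * (640000 * u) := by ring
      _ ≤ n / 200 * Δ := Nat.mul_le_mul_left _ hΔ
  have hdecay : (1 - 0.01 / 2 : ℝ) ^ (n / 200 * Δ) ≤ (1 / 2) ^ (8 * n * u) :=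
    calc (1 - 0.01 / 2 : ℝ) ^ (n / 200 * Δ) ≤ (1 - 0.01 / 2) ^ (200 * (8 * n * u)) :=
          pow_le_pow_of_le_one (by norm_num) (by norm_num) hexp
      _ = ((1 - 0.01 / 2) ^ 200) ^ (8 * n * u) := pow_mul _ _ _
      _ ≤ (1 / 2) ^ (8 * n * u) := by gcongr; norm_num
  calc (2 * 2 ^ u : ℝ) ^ (2 * n) * (1 - 0.01 / 2) ^ (n / 200 * Δ)
      ≤ (2 * 2 ^ u) ^ (2 * n) * (1 / 2) ^ (8 * n * u) := by gcongr
    _ = 2 ^ (2 * n * u + 2 * n) * (1 / 2) ^ (8 * n * u) := by ring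
    _ < 2 ^ (8 * n * u) * (1 / 2) ^ (8 * n * u) := by
        gcongr
        · norm_num
        · linarith [Nat.mul_le_mul_left n hu, Nat.mul_pos (by omega : 0 < n) hu]
    _ = 1 := by rw [← mul_pow]; norm_num

/-- (The bipartite lower-bound construction.)  There are `c' > 1` and
`Δ₀` such that for all `Δ ≥ Δ₀` and `n ≥ Δ` there exist a bipartite digraph `D₀` with
vertex classes `A = Fin m` (embedded via `Sum.inl`) and `B = Fin m` (embedded via
`Sum.inr`), where `m = |A| = |B| ≤ n`, having maximum degree at most `Δ` and all edges
directed from `A` to `B`, and a tournament `R` on at least `(c')^Δ · n` vertices, such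
that for all `A' ⊆ A` and `B' ⊆ B`:
(1) if `|A'|, |B'| ≥ 0.98 |A|` then `R` contains no copy of `D₀[A' ∪ B']`, and
(2) if `|A'|, |B'| ≥ 0.01 |A|` then `D₀` has an edge from `A'` to `B'`. -/
theorem bipartite_lower_bound :
    ∃ c' : ℝ, 1 < c' ∧ ∃ Δ₀ : ℕ, ∀ Δ : ℕ, Δ₀ ≤ Δ → ∀ n : ℕ, Δ ≤ n →
      ∃ (m : ℕ) (D₀ : Digraph (Fin m ⊕ Fin m)) (M : ℕ) (R : Digraph (Fin M)),
        m ≤ n ∧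
        (∀ u v : Fin m ⊕ Fin m, D₀.Adj u v →
          (∃ x : Fin m, u = Sum.inl x) ∧ (∃ y : Fin m, v = Sum.inr y)) ∧
        (∀ v : Fin m ⊕ Fin m, D₀.degree v ≤ Δ) ∧
        c' ^ Δ * (n : ℝ) ≤ (M : ℝ) ∧
        R.IsTournament ∧
        (∀ A' B' : Finset (Fin m),
          (0.98 * (m : ℝ) ≤ (A'.card : ℝ) → 0.98 * (m : ℝ) ≤ (B'.card : ℝ) →
            ¬ ∃ φ : (Fin m ⊕ Fin m) → Fin M,
                Set.InjOn φ ((Sum.inl '' (A' : Set (Fin m))) ∪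
                  (Sum.inr '' (B' : Set (Fin m)))) ∧
                ∀ u ∈ ((Sum.inl '' (A' : Set (Fin m))) ∪
                    (Sum.inr '' (B' : Set (Fin m)))),
                  ∀ v ∈ ((Sum.inl '' (A' : Set (Fin m))) ∪
                    (Sum.inr '' (B' : Set (Fin m)))),
                    D₀.Adj u v → R.Adj (φ u) (φ v)) ∧
          (0.01 * (m : ℝ) ≤ (A'.card : ℝ) → 0.01 * (m : ℝ) ≤ (B'.card : ℝ) →
            ∃ a ∈ A', ∃ b ∈ B', D₀.Adj (Sum.inl a) (Sum.inr b))) := by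
  obtain ⟨c, hc, hgrowth⟩ := exists_base_pow_mul_le (N := 640000) (by norm_num)
  refine ⟨c, hc, 40 * 640000, fun Δ hΔ n hn ↦ ?_⟩
  have hu : 0 < Δ / 640000 := by omega
  have hM := hgrowth Δ n hΔ (by omega)
  set u := Δ / 640000
  set s := n / (32 * u)
  have : NeZero n := ⟨by omega⟩
  have : Nontrivial (Fin (2 ^ u)) := Fin.nontrivial_iff_two_le.2 (Nat.le_self_pow hu.ne' 2)
  obtain ⟨χ, hspread⟩ := exists_orientation_isOutSpread (V := Fin (2 ^ u)) hu (by simp)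
  have hT := orientation_isTournament χ
  obtain ⟨π, hπ⟩ := exists_meetsDenseBackPairs (α := Fin n) (κ := Fin Δ) (orientation χ)
    (ε := 0.01) (r := n / 200) (by norm_num)
    (by
      have : ((n / 200 : ℕ) : ℝ) ≤ n / 200 := Nat.cast_div_le
      rw [Fintype.card_fin]
      linarith)
    (by simpa using two_mul_two_pow_pow_mul_lt_one (n := n) (Δ := Δ) (by omega) hu (by omega))
  refine ⟨n, matchingUnion π, 2 ^ u * s, blowup (orientation χ) Fin.divNat, le_rfl,
    fun _ _ ↦ exists_inl_inr_of_matchingUnion_adj,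
    fun v ↦ (matchingUnion_degree_le π v).trans_eq (Fintype.card_fin Δ), hM,
    blowup_isTournament hT _, fun A B ↦ ⟨fun hA hB ↦ ?_, fun hA hB ↦ ?_⟩⟩
  · exact hπ.not_exists_copy_blowup hT hspread hu
      (by simpa using Nat.mul_div_le n (32 * u)) card_fin_divNat_eq_le (by simpa using hA)
      (by simpa using hB)
  · exact hπ.exists_adj (exists_adj_of_isTournament hT) (by simpa using hA) (by simpa using hB)
end
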